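/- arXiv:math/0703532 — 2 statements merged into one kernel-verified Lean document; each statement's English description precedes it below -/
import Mathlib

section
/- Fix g ≥ 1 and let Γ = Sp(2g, ℤ) be the integral symplectic group. Consider a walk setup on Γ (symmetric primitive adjacency matrix A : Fin n → Fin n → ℕ with vertex labels t : Fin n → Γ) such that the set {t i : i : Fin n} generates Γ. For each N, let q_N be (sum of the weights of walks w of length N such that the characteristic polynomial of the underlying 2g × 2g integer matrix of γ_w, mapped to ℚ[X], is not irreducible) / (sum of the weights of all walks of length N). Then q_N tends to 0 as N tends to infinity. -/
/-!
Reduce the walk modulo many primes at once. For a finite set `s` of primes `p ≥ 5`, the group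
`∏ p ∈ s, Sp(2g, 𝔽_p)` is perfect and finite, and generating labels stay generating after reduction.
Consider the sets of group elements reached by the walks of length `m` ending at a given vertex.
Once they stop growing, each label carries the set for `m` to the set for `m + 1`, so commutators
fix these sets, which are therefore the whole group. Thus the walk on pairs (vertex, group element)
is primitive and its group coordinate equidistributes.

If the characteristic polynomial of an integral matrix is reducible over `ℚ`, it is reducible modulo
every prime. Let `K` be the degree `2g` extension of a finite field `F` of odd order `q`. The
elements of `K` with norm one to the degree `g` subfield form a cyclic group of order `q ^ g + 1`
acting on `K` by symplectic maps, and at least half of them generate `K` over `F`. Counting their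
conjugates shows that at least a proportion `1 / (4 * g)` of `Sp(2g, F)` has irreducible
characteristic polynomial. So the limiting proportion of reducible products is at most
`(1 - 1 / (4 * g)) ^ |s|`, and `|s|` is arbitrary.
-/

open scoped BigOperators

namespace SymplecticWalk

open Filter Matrix Polynomial
open scoped Pointwise Topology commutatorElement

section PositivePowers

variable {ι R : Type*} [Fintype ι] [Ring R] [LinearOrder R] [IsStrictOrderedRing R]
  {A B : Matrix ι ι R}

lemma mul_apply_pos_iff_of_nonneg (hA : ∀ i j, 0 ≤ A i j) (hB : ∀ i j, 0 ≤ B i j) {i j : ι} :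
    0 < (A * B) i j ↔ ∃ k, 0 < A i k ∧ 0 < B k j := by
  have hterm : ∀ k ∈ Finset.univ, 0 ≤ A i k * B k j := fun k _ => mul_nonneg (hA i k) (hB k j)
  simp only [Matrix.mul_apply, Finset.sum_pos_iff_of_nonneg hterm, Finset.mem_univ, true_and]
  refine exists_congr fun k => ⟨fun h => ?_, fun h => mul_pos h.1 h.2⟩
  exact ⟨pos_of_mul_pos_left h (hB k j), pos_of_mul_pos_right h (hA i k)⟩

variable [DecidableEq ι]

lemma eq_of_pow_apply_pos {α : Type*} {f : ι → α} (hA : ∀ i j, 0 ≤ A i j)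
    (hf : ∀ i j, 0 < A i j → f i = f j) (l : ℕ) {i j : ι} (h : 0 < (A ^ l) i j) : f i = f j := by
  induction l generalizing j with
  | zero =>
    by_cases hij : i = j
    · rw [hij]
    · simp [hij] at h
  | succ l ih =>
    rw [pow_succ, mul_apply_pos_iff_of_nonneg (Matrix.pow_apply_nonneg hA l) hA] at h
    obtain ⟨k, hik, hkj⟩ := h
    exact (ih hik).trans (hf k j hkj)

lemma exists_apply_pos_of_isPrimitive (hA : A.IsPrimitive) (j : ι) : ∃ i, 0 < A i j := by
  obtain ⟨k, hk, hpos⟩ := hA.exists_pos_pow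
  have hjj := hpos j j
  rw [← Nat.sub_add_cancel hk, pow_succ,
    mul_apply_pos_iff_of_nonneg (Matrix.pow_apply_nonneg hA.nonneg _) hA.nonneg] at hjj
  exact hjj.imp fun _ h => h.2

lemma exists_forall_pow_apply_pos_of_isPrimitive (hA : A.IsPrimitive) :
    ∃ k, ∀ m, k ≤ m → ∀ i j, 0 < (A ^ m) i j := by
  obtain ⟨k, -, hk⟩ := hA.exists_pos_pow
  refine ⟨k, fun m hm => Nat.le_induction hk (fun m _ ih i j => ?_) m hm⟩
  obtain ⟨q, hq⟩ := exists_apply_pos_of_isPrimitive hA j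
  rw [pow_succ, mul_apply_pos_iff_of_nonneg (Matrix.pow_apply_nonneg hA.nonneg _) hA.nonneg]
  exact ⟨q, ih i q, hq⟩

end PositivePowers

section Reachability

variable {ι G R : Type*} [Group G] [Ring R] [LinearOrder R] {t : ι → G} {A : Matrix ι ι R}
  {S : ℕ → ι → Set G} {T : ℕ → Set G} {M : ℕ}

lemma exists_forall_smul_eq_add (hT : ∀ m, M ≤ m → ∀ i, t i • T m = T (m + 1)) {g : G}
    (hg : g ∈ Submonoid.closure (Set.range t)) : ∃ d, ∀ m, M ≤ m → g • T m = T (m + d) := by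
  induction hg using Submonoid.closure_induction with
  | mem _ h =>
    obtain ⟨i, rfl⟩ := h
    exact ⟨1, fun m hm => hT m hm i⟩
  | one => exact ⟨0, fun m _ => one_smul G _⟩
  | mul g h _ _ ihg ihh =>
    obtain ⟨d, hd⟩ := ihg
    obtain ⟨e, he⟩ := ihh
    exact ⟨e + d, fun m hm => by rw [mul_smul, he m hm, hd _ (by lia), add_assoc]⟩

lemma smul_subset_of_apply_pos (hS : ∀ m j, S (m + 1) j = ⋃ i ∈ {i | 0 < A i j}, t j • S m i)
    {i j : ι} (hij : 0 < A i j) (m : ℕ) : t j • S m i ⊆ S (m + 1) j := by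
  rw [hS]
  exact Set.subset_biUnion_of_mem (u := fun i => t j • S m i) hij

variable [Finite G]

-- Every element of `G` shifts the index `m`, and shifts of the index commute, so commutators fix
-- each `T m`.
lemma eq_univ_of_smul_eq_succ (hgen : Subgroup.closure (Set.range t) = ⊤)
    (hperf : commutator G = ⊤)
    (hT : ∀ m, M ≤ m → ∀ i, t i • T m = T (m + 1)) {m : ℕ} (hm : M ≤ m) (hne : (T m).Nonempty) :
    T m = Set.univ := by
  have hshift : ∀ g : G, ∃ d, ∀ m, M ≤ m → g • T m = T (m + d) := fun g =>
    exists_forall_smul_eq_add hT <| by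
      rw [← Subgroup.closure_toSubmonoid_of_finite, hgen]
      trivial
  have hcomm : ∀ n, M ≤ n → ∀ g h : G, (g * h) • T n = (h * g) • T n := by
    intro n hn g h
    obtain ⟨d, hd⟩ := hshift g
    obtain ⟨e, he⟩ := hshift h
    rw [mul_smul, mul_smul, he n hn, hd n hn, hd _ (by lia), he _ (by lia), add_right_comm]
  have hstab : commutator G ≤ MulAction.stabilizer G (T m) := by
    refine Subgroup.commutator_le.2 fun g _ h _ => ?_
    obtain ⟨d, hd⟩ := hshift (g⁻¹ * h⁻¹)
    rw [MulAction.mem_stabilizer_iff, commutatorElement_def, mul_assoc, mul_smul, hd m hm,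
      hcomm _ (by lia), ← hd m hm, smul_smul]
    simp
  obtain ⟨y, hy⟩ := hne
  refine Set.eq_univ_of_forall fun x => ?_
  have hx : (x * y⁻¹) • T m = T m := hstab (hperf ▸ Subgroup.mem_top _)
  rw [← hx]
  exact ⟨y, hy, by simp⟩

lemma smul_eq_of_apply_pos (hS : ∀ m j, S (m + 1) j = ⋃ i ∈ {i | 0 < A i j}, t j • S m i)
    {c : ℕ} (hc : ∀ m, M ≤ m → ∀ j, (S m j).ncard = c) {m : ℕ} (hm : M ≤ m) {i j : ι}
    (hij : 0 < A i j) : t j • S m i = S (m + 1) j :=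
  Set.eq_of_subset_of_ncard_le (smul_subset_of_apply_pos hS hij m)
    (by rw [Set.ncard_smul_set, hc m hm, hc (m + 1) (by lia)])

variable [IsStrictOrderedRing R] [Fintype ι] [DecidableEq ι]

lemma ncard_le_ncard_of_pow_apply_pos (hA : ∀ i j, 0 ≤ A i j)
    (hS : ∀ m j, S (m + 1) j = ⋃ i ∈ {i | 0 < A i j}, t j • S m i) (m l : ℕ) {i j : ι}
    (h : 0 < (A ^ l) i j) : (S m i).ncard ≤ (S (m + l) j).ncard := by
  induction l generalizing j with
  | zero =>
    by_cases hij : i = j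
    · rw [hij, add_zero]
    · simp [hij] at h
  | succ l ih =>
    rw [pow_succ, mul_apply_pos_iff_of_nonneg (Matrix.pow_apply_nonneg hA l) hA] at h
    obtain ⟨k, hik, hkj⟩ := h
    calc (S m i).ncard ≤ (S (m + l) k).ncard := ih hik
      _ = (t j • S (m + l) k).ncard := (Set.ncard_smul_set (t j) _).symm
      _ ≤ (S (m + (l + 1)) j).ncard := Set.ncard_le_ncard (smul_subset_of_apply_pos hS hkj _)

lemma exists_forall_ncard_eq (hA : A.IsPrimitive)
    (hS : ∀ m j, S (m + 1) j = ⋃ i ∈ {i | 0 < A i j}, t j • S m i) (i₀ : ι)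
    (h₀ : (S 0 i₀).Nonempty) : ∃ c M, 0 < c ∧ ∀ m, M ≤ m → ∀ j, (S m j).ncard = c := by
  let sizes : Set ℕ := Set.range fun q : ℕ × ι => (S q.1 q.2).ncard
  have hbdd : BddAbove sizes := by
    refine ⟨Nat.card G, ?_⟩
    rintro _ ⟨q, rfl⟩
    exact Set.ncard_le_card _
  obtain ⟨⟨M, j₀⟩, hmax⟩ : sSup sizes ∈ sizes := Nat.sSup_mem ⟨_, ⟨0, i₀⟩, rfl⟩ hbdd
  have hle : ∀ m j, (S m j).ncard ≤ sSup sizes := fun m j => le_csSup hbdd ⟨(m, j), rfl⟩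
  obtain ⟨k, hk⟩ := exists_forall_pow_apply_pos_of_isPrimitive hA
  refine ⟨sSup sizes, M + k, (h₀.ncard_pos).trans_le (hle 0 i₀), fun m hm j => ?_⟩
  refine (hle m j).antisymm ?_
  have hstep := ncard_le_ncard_of_pow_apply_pos hA.nonneg hS M (m - M) (hk _ (by lia) j₀ j)
  rwa [Nat.add_sub_cancel' (by lia), show (S M j₀).ncard = sSup sizes from hmax] at hstep

lemma forall_eq_of_forall_ncard_eq (hA : A.IsPrimitive) (hsymm : A.IsSymm)
    (hS : ∀ m j, S (m + 1) j = ⋃ i ∈ {i | 0 < A i j}, t j • S m i)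
    {c : ℕ} (hc : ∀ m, M ≤ m → ∀ j, (S m j).ncard = c) {m : ℕ} (hm : M ≤ m) (i j : ι) :
    S m i = S m j := by
  have htwo_step : ∀ i j, 0 < (A ^ 2) i j → S m i = S m j := by
    intro i j h
    rw [pow_two, mul_apply_pos_iff_of_nonneg hA.nonneg hA.nonneg] at h
    obtain ⟨k, hik, hkj⟩ := h
    rw [← hsymm.apply] at hkj
    apply smul_left_cancel (t k)
    rw [smul_eq_of_apply_pos hS hc hm hik, smul_eq_of_apply_pos hS hc hm hkj]
  obtain ⟨k, hk⟩ := exists_forall_pow_apply_pos_of_isPrimitive hA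
  refine eq_of_pow_apply_pos (Matrix.pow_apply_nonneg hA.nonneg 2) htwo_step k ?_
  rw [← pow_mul]
  exact hk _ (by lia) i j

lemma exists_forall_eq_univ (hA : A.IsPrimitive) (hsymm : A.IsSymm)
    (hgen : Subgroup.closure (Set.range t) = ⊤) (hperf : commutator G = ⊤)
    (hS : ∀ m j, S (m + 1) j = ⋃ i ∈ {i | 0 < A i j}, t j • S m i) (i₀ : ι)
    (h₀ : (S 0 i₀).Nonempty) : ∃ M, ∀ m, M ≤ m → ∀ j, S m j = Set.univ := by
  obtain ⟨c, M, hc₀, hc⟩ := exists_forall_ncard_eq hA hS i₀ h₀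
  have hconst := @fun m hm => forall_eq_of_forall_ncard_eq (m := m) hA hsymm hS hc hm
  have hsucc : ∀ m, M ≤ m → ∀ j, t j • S m i₀ = S (m + 1) i₀ := by
    intro m hm j
    obtain ⟨i, hij⟩ := exists_apply_pos_of_isPrimitive hA j
    rw [hconst m hm i₀ i, smul_eq_of_apply_pos hS hc hm hij, hconst (m + 1) (by lia) j i₀]
  refine ⟨M, fun m hm j => ?_⟩
  rw [hconst m hm j i₀]
  refine eq_univ_of_smul_eq_succ (T := fun m => S m i₀) hgen hperf hsucc hm ?_
  rw [← Set.ncard_pos, hc m hm]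
  exact hc₀

end Reachability

section SkewProduct

variable {ι G R : Type*} [Group G] [DecidableEq G]

/-- The skew product of the transition matrix `A` with the labelling `t`: a step from `i` to `j`
multiplies the group coordinate by `t j` on the left. -/
def skewProduct [Zero R] (A : Matrix ι ι R) (t : ι → G) : Matrix (ι × G) (ι × G) R :=
  of fun s s' => if s'.2 = t s'.1 * s.2 then A s.1 s'.1 else 0

variable [Ring R] {A : Matrix ι ι R} {t : ι → G}

section Sums

variable [Fintype ι] [Fintype G] [DecidableEq ι]

lemma sum_skewProduct_pow_apply_right (m : ℕ) (s : ι × G) (j : ι) :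
    ∑ y, (skewProduct A t ^ m) s (j, y) = (A ^ m) s.1 j := by
  induction m generalizing j with
  | zero => by_cases h : s.1 = j <;> simp [Matrix.one_apply, Prod.ext_iff, h]
  | succ m ih =>
    simp only [pow_succ, Matrix.mul_apply, ← ih, Finset.sum_mul]
    rw [Finset.sum_comm, Fintype.sum_prod_type]
    simp only [← Finset.mul_sum]
    simp [skewProduct]

lemma sum_skewProduct_pow_apply_left (m : ℕ) (i : ι) (s : ι × G) :
    ∑ x, (skewProduct A t ^ m) (i, x) s = (A ^ m) i s.1 := by
  induction m generalizing i with
  | zero => by_cases h : i = s.1 <;> simp [Matrix.one_apply, Prod.ext_iff, h]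
  | succ m ih =>
    simp only [pow_succ', Matrix.mul_apply, ← ih, Finset.mul_sum]
    rw [Finset.sum_comm, Fintype.sum_prod_type]
    simp only [← Finset.sum_mul]
    simp [skewProduct, ← inv_mul_eq_iff_eq_mul]

end Sums

variable [LinearOrder R]

lemma skewProduct_nonneg (hA : ∀ i j, 0 ≤ A i j) (s s' : ι × G) : 0 ≤ skewProduct A t s s' :=
  ite_nonneg (hA _ _) le_rfl

lemma skewProduct_apply_pos_iff {s s' : ι × G} :
    0 < skewProduct A t s s' ↔ s'.2 = t s'.1 * s.2 ∧ 0 < A s.1 s'.1 := by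
  by_cases h : s'.2 = t s'.1 * s.2 <;> simp [skewProduct, h]

variable [IsStrictOrderedRing R] [Fintype ι] [Fintype G] [DecidableEq ι]

lemma isPrimitive_skewProduct (hA : A.IsPrimitive) (hsymm : A.IsSymm)
    (hgen : Subgroup.closure (Set.range t) = ⊤) (hperf : commutator G = ⊤) :
    (skewProduct A t).IsPrimitive := by
  have hnonneg := skewProduct_nonneg (t := t) hA.nonneg
  have hreach : ∀ s, ∃ M, ∀ m, M ≤ m → ∀ s', 0 < (skewProduct A t ^ m) s s' := by
    intro s
    let S (m : ℕ) (j : ι) : Set G := {y | 0 < (skewProduct A t ^ m) s (j, y)}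
    have hS : ∀ m j, S (m + 1) j = ⋃ i ∈ {i | 0 < A i j}, t j • S m i := by
      intro m j
      ext y
      rw [Set.mem_ofPred_eq, pow_succ,
        mul_apply_pos_iff_of_nonneg (Matrix.pow_apply_nonneg hnonneg m) hnonneg]
      simp [S, skewProduct_apply_pos_iff, Set.mem_smul_set_iff_inv_smul_mem,
        ← inv_mul_eq_iff_eq_mul, and_comm]
    obtain ⟨M, hM⟩ := exists_forall_eq_univ hA hsymm hgen hperf hS s.1 ⟨s.2, by simp [S]⟩
    exact ⟨M, fun m hm s' => (hM m hm s'.1).ge (Set.mem_univ s'.2)⟩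
  choose M hM using hreach
  refine ⟨hnonneg, ∑ s, M s + 1, by lia, fun s s' => hM s _ ?_ s'⟩
  have := Finset.single_le_sum_of_canonicallyOrdered (f := M) (Finset.mem_univ s)
  lia

end SkewProduct

section NearUniform

variable {ι G : Type*} [Fintype G] {a : ι × G → ℝ} {δ β : ℝ}

/-- On each fibre `{i} × G` the mass function `a` is bounded below by `1 - δ` times the uniform
distribution of the same total mass. -/
def NearUniform (δ : ℝ) (a : ι × G → ℝ) : Prop :=
  ∀ i x, (1 - δ) * ∑ z, a (i, z) ≤ Fintype.card G * a (i, x)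

variable [Fintype ι]

-- Doeblin's argument: the part `β * D` of the kernel `C` forgets the group coordinate.
lemma NearUniform.vecMul (ha : NearUniform δ a) {C : Matrix (ι × G) (ι × G) ℝ} {D : Matrix ι ι ℝ}
    (hright : ∀ s j, ∑ y, C s (j, y) = D s.1 j) (hleft : ∀ i s, ∑ x, C (i, x) s = D i s.1)
    (hβ : ∀ s s', β * D s.1 s'.1 ≤ C s s') :
    NearUniform ((1 - Fintype.card G * β) * δ) (a ᵥ* C) := by
  intro j y
  have hfibre : ∑ z, (a ᵥ* C) (j, z) = ∑ i, (∑ x, a (i, x)) * D i j := by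
    simp only [Matrix.vecMul, dotProduct]
    rw [Finset.sum_comm, Fintype.sum_prod_type]
    simp only [← Finset.mul_sum, hright, ← Finset.sum_mul]
  rw [hfibre, Matrix.vecMul, dotProduct, Fintype.sum_prod_type, Finset.mul_sum, Finset.mul_sum]
  refine Finset.sum_le_sum fun i _ => ?_
  have hprod : 0 ≤ ∑ x, (Fintype.card G * a (i, x) - (1 - δ) * ∑ z, a (i, z)) *
      (C (i, x) (j, y) - β * D i j) :=
    Finset.sum_nonneg fun x _ =>
      mul_nonneg (sub_nonneg.2 (ha i x)) (sub_nonneg.2 (hβ (i, x) (j, y)))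
  have hexpand : ∑ x, (Fintype.card G * a (i, x) - (1 - δ) * ∑ z, a (i, z)) *
      (C (i, x) (j, y) - β * D i j) = Fintype.card G * ∑ x, a (i, x) * C (i, x) (j, y) -
        (1 - (1 - Fintype.card G * β) * δ) * ((∑ x, a (i, x)) * D i j) := by
    simp only [sub_mul, mul_sub, Finset.sum_sub_distrib, ← Finset.sum_mul, ← Finset.mul_sum,
      mul_assoc, hleft, Finset.sum_const, Finset.card_univ, nsmul_eq_mul]
    ring
  linarith

lemma NearUniform.card_mul_le [DecidableEq G] (ha : NearUniform δ a) (S : Finset G) :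
    (1 - δ) * (S.card * ∑ s, a s) ≤ Fintype.card G * ∑ s with s.2 ∈ S, a s := by
  have hS : ∑ s with s.2 ∈ S, a s = ∑ i, ∑ x ∈ S, a (i, x) := by
    rw [Finset.sum_filter, Fintype.sum_prod_type]
    simp
  rw [hS, Fintype.sum_prod_type, Finset.mul_sum, Finset.mul_sum, Finset.mul_sum]
  refine Finset.sum_le_sum fun i _ => ?_
  calc (1 - δ) * (S.card * ∑ z, a (i, z)) = ∑ _x ∈ S, (1 - δ) * ∑ z, a (i, z) := by
        rw [Finset.sum_const, nsmul_eq_mul]; ring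
    _ ≤ ∑ x ∈ S, Fintype.card G * a (i, x) := Finset.sum_le_sum fun x _ => ha i x
    _ = Fintype.card G * ∑ x ∈ S, a (i, x) := (Finset.mul_sum ..).symm

end NearUniform

section Walks

variable {ι : Type*} {A : Matrix ι ι ℝ} {N : ℕ}

/-- The weight of a walk `w` of length `N`: the product of the entries of `A` along its steps. -/
def walkWeight (A : Matrix ι ι ℝ) (w : Fin (N + 1) → ι) : ℝ :=
  ∏ j : Fin N, A (w j.castSucc) (w j.succ)

lemma walkWeight_nonneg (hA : ∀ i j, 0 ≤ A i j) (w : Fin (N + 1) → ι) : 0 ≤ walkWeight A w :=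
  Finset.prod_nonneg fun _ _ => hA _ _

lemma walkWeight_snoc (w : Fin (N + 1) → ι) (j : ι) :
    walkWeight A (Fin.snoc (α := fun _ => ι) w j) = walkWeight A w * A (w (Fin.last N)) j := by
  simp only [walkWeight, Fin.prod_univ_castSucc, Fin.snoc_castSucc, ← Fin.castSucc_succ,
    Fin.succ_last, Fin.snoc_last]

lemma exists_walkWeight_pos [Nonempty ι] (hA : ∀ i, ∃ j, 0 < A i j) (N : ℕ) :
    ∃ w : Fin (N + 1) → ι, 0 < walkWeight A w := by
  induction N with
  | zero => exact ⟨fun _ => Classical.arbitrary ι, by simp [walkWeight]⟩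
  | succ N ih =>
    obtain ⟨w, hw⟩ := ih
    obtain ⟨j, hj⟩ := hA (w (Fin.last N))
    exact ⟨Fin.snoc (α := fun _ => ι) w j, by rw [walkWeight_snoc]; exact mul_pos hw hj⟩

section Labels

variable {G H : Type*} [Group G] [Group H] {t : ι → G}

/-- The group element `t (w N) * ⋯ * t (w 0)` of a walk `w` whose vertices are labelled by `t`. -/
def walkProd (t : ι → G) (w : Fin (N + 1) → ι) : G :=
  (List.ofFn fun j => t (w j)).reverse.prod

lemma walkProd_snoc (w : Fin (N + 1) → ι) (j : ι) :
    walkProd t (Fin.snoc (α := fun _ => ι) w j) = t j * walkProd t w := by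
  rw [walkProd, List.ofFn_succ']
  simp [walkProd]

lemma map_walkProd (f : G →* H) (w : Fin (N + 1) → ι) :
    f (walkProd t w) = walkProd (f ∘ t) w := by
  simp [walkProd, map_list_prod, List.map_ofFn, Function.comp_def]

variable [Fintype ι] [DecidableEq ι] [DecidableEq G]

/-- The total weight of the walks of length `N` that end in the vertex `s.1` and have group element
`s.2`. -/
def walkMass (A : Matrix ι ι ℝ) (t : ι → G) (N : ℕ) (s : ι × G) : ℝ :=
  ∑ w : Fin (N + 1) → ι with (w (Fin.last N), walkProd t w) = s, walkWeight A w

lemma walkMass_nonneg (hA : ∀ i j, 0 ≤ A i j) (s : ι × G) : 0 ≤ walkMass A t N s :=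
  Finset.sum_nonneg fun w _ => walkWeight_nonneg hA w

variable [Fintype G]

lemma sum_walkMass_filter (S : Finset G) :
    ∑ s with s.2 ∈ S, walkMass A t N s =
      ∑ w : Fin (N + 1) → ι with walkProd t w ∈ S, walkWeight A w := by
  simp only [walkMass, Finset.sum_fiberwise_eq_sum_filter, Finset.mem_filter_univ]

lemma sum_walkMass : ∑ s, walkMass A t N s = ∑ w : Fin (N + 1) → ι, walkWeight A w :=
  Finset.sum_fiberwise _ _ _

lemma walkMass_succ : walkMass A t (N + 1) = walkMass A t N ᵥ* skewProduct A t := by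
  ext s'
  have hstep (w : Fin (N + 1) → ι) : ∑ j : ι, (if (j, t j * walkProd t w) = s' then
      walkWeight A w * A (w (Fin.last N)) j else 0) =
        walkWeight A w * skewProduct A t (w (Fin.last N), walkProd t w) s' := by
    simp [skewProduct, Prod.ext_iff, ite_and, eq_comm]
  calc walkMass A t (N + 1) s'
      = ∑ w : Fin (N + 1) → ι, ∑ j : ι, if (j, t j * walkProd t w) = s' then
          walkWeight A w * A (w (Fin.last N)) j else 0 := by
        rw [walkMass, Finset.sum_filter, ← (Fin.snocEquiv fun _ => ι).sum_comp,
          Fintype.sum_prod_type, Finset.sum_comm]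
        simp [Fin.snocEquiv, walkProd_snoc, walkWeight_snoc]
    _ = ∑ s, ∑ w : Fin (N + 1) → ι with (w (Fin.last N), walkProd t w) = s,
          walkWeight A w * skewProduct A t (w (Fin.last N), walkProd t w) s' := by
        simp only [hstep, Finset.sum_fiberwise]
    _ = (walkMass A t N ᵥ* skewProduct A t) s' := by
        simp only [Matrix.vecMul, dotProduct, walkMass, Finset.sum_mul]
        refine Finset.sum_congr rfl fun s _ => Finset.sum_congr rfl fun w hw => ?_
        rw [(Finset.mem_filter.1 hw).2]

lemma walkMass_add (m : ℕ) : walkMass A t (N + m) = walkMass A t N ᵥ* skewProduct A t ^ m := by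
  induction m with
  | zero => simp
  | succ m ih => rw [← add_assoc, walkMass_succ, ih, Matrix.vecMul_vecMul, pow_succ]

end Labels

end Walks

section Equidistribution

variable {ι G : Type*} [Fintype ι] [DecidableEq ι] [Nonempty ι] [Group G] [Fintype G]
  [DecidableEq G] {A : Matrix ι ι ℝ} {t : ι → G}

lemma exists_mul_pow_apply_le_skewProduct_pow_apply {m : ℕ}
    (hm : ∀ s s', 0 < (skewProduct A t ^ m) s s') :
    ∃ β : ℝ, 0 < β ∧ Fintype.card G * β ≤ 1 ∧
      ∀ s s', β * (A ^ m) s.1 s'.1 ≤ (skewProduct A t ^ m) s s' := by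
  have hApos : ∀ i j, 0 < (A ^ m) i j := fun i j => by
    rw [← sum_skewProduct_pow_apply_right (t := t) m (i, 1) j]
    exact Finset.sum_pos (fun y _ => hm _ _) Finset.univ_nonempty
  obtain ⟨⟨s₀, s₀'⟩, hmin⟩ := Finite.exists_min fun q : (ι × G) × (ι × G) =>
    (skewProduct A t ^ m) q.1 q.2 / (A ^ m) q.1.1 q.2.1
  set β := (skewProduct A t ^ m) s₀ s₀' / (A ^ m) s₀.1 s₀'.1
  have hβ : ∀ s s', β * (A ^ m) s.1 s'.1 ≤ (skewProduct A t ^ m) s s' := fun s s' =>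
    (le_div_iff₀ (hApos _ _)).1 (hmin (s, s'))
  refine ⟨β, div_pos (hm _ _) (hApos _ _), ?_, hβ⟩
  refine le_of_mul_le_mul_right ?_ (hApos s₀.1 s₀'.1)
  calc Fintype.card G * β * (A ^ m) s₀.1 s₀'.1
      = ∑ _y : G, β * (A ^ m) s₀.1 s₀'.1 := by simp [mul_assoc]
    _ ≤ ∑ y : G, (skewProduct A t ^ m) s₀ (s₀'.1, y) := Finset.sum_le_sum fun y _ => hβ _ (_, y)
    _ = 1 * (A ^ m) s₀.1 s₀'.1 := by rw [sum_skewProduct_pow_apply_right, one_mul]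

lemma exists_tendsto_zero_nearUniform_walkMass (hA : A.IsPrimitive) (hsymm : A.IsSymm)
    (hgen : Subgroup.closure (Set.range t) = ⊤) (hperf : commutator G = ⊤) :
    ∃ δ : ℕ → ℝ, Tendsto δ atTop (𝓝 0) ∧ ∀ N, NearUniform (δ N) (walkMass A t N) := by
  obtain ⟨m, hm₀, hm⟩ := (isPrimitive_skewProduct hA hsymm hgen hperf).exists_pos_pow
  obtain ⟨β, hβ₀, hβ₁, hβ⟩ := exists_mul_pow_apply_le_skewProduct_pow_apply hm
  have hcard : (0 : ℝ) < Fintype.card G := Nat.cast_pos.2 Fintype.card_pos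
  refine ⟨fun N => (1 - Fintype.card G * β) ^ (N / m), ?_, fun N => ?_⟩
  · exact (tendsto_pow_atTop_nhds_zero_of_lt_one (sub_nonneg.2 hβ₁)
      (sub_lt_self 1 (mul_pos hcard hβ₀))).comp (Nat.tendsto_div_const_atTop hm₀.ne')
  · suffices h : ∀ r q, NearUniform ((1 - Fintype.card G * β) ^ q) (walkMass A t (r + m * q)) by
      simpa only [Nat.mod_add_div] using h (N % m) (N / m)
    intro r q
    induction q with
    | zero =>
      intro i x
      simpa using mul_nonneg hcard.le (walkMass_nonneg hA.nonneg (i, x))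
    | succ q ih =>
      rw [mul_add_one, ← add_assoc, walkMass_add, pow_succ']
      exact ih.vecMul (sum_skewProduct_pow_apply_right m) (sum_skewProduct_pow_apply_left m) hβ

theorem tendsto_sum_walkWeight_filter_div (hA : A.IsPrimitive) (hsymm : A.IsSymm)
    (hgen : Subgroup.closure (Set.range t) = ⊤) (hperf : commutator G = ⊤) (S : Finset G) :
    Tendsto (fun N => (∑ w : Fin (N + 1) → ι with walkProd t w ∈ S, walkWeight A w) /
      ∑ w : Fin (N + 1) → ι, walkWeight A w) atTop (𝓝 (S.card / Fintype.card G)) := by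
  obtain ⟨δ, hδ, hnear⟩ := exists_tendsto_zero_nearUniform_walkMass hA hsymm hgen hperf
  have hcard : (0 : ℝ) < Fintype.card G := Nat.cast_pos.2 Fintype.card_pos
  have htotal (N : ℕ) : 0 < ∑ w : Fin (N + 1) → ι, walkWeight A w := by
    have hnext : ∀ i, ∃ j, 0 < A i j := fun i => by
      simpa only [hsymm.apply] using exists_apply_pos_of_isPrimitive hA i
    obtain ⟨w, hw⟩ := exists_walkWeight_pos hnext N
    exact Finset.sum_pos' (fun w _ => walkWeight_nonneg hA.nonneg w) ⟨w, Finset.mem_univ w, hw⟩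
  have hlower (T : Finset G) (N : ℕ) : (1 - δ N) * (T.card / Fintype.card G) ≤
      (∑ w : Fin (N + 1) → ι with walkProd t w ∈ T, walkWeight A w) /
        ∑ w : Fin (N + 1) → ι, walkWeight A w := by
    have h := (hnear N).card_mul_le T
    rw [sum_walkMass, sum_walkMass_filter, ← mul_assoc] at h
    rw [le_div_iff₀ (htotal N), mul_div_assoc', div_mul_eq_mul_div, div_le_iff₀' hcard]
    exact h
  have hupper (N : ℕ) : (∑ w : Fin (N + 1) → ι with walkProd t w ∈ S, walkWeight A w) /
      ∑ w : Fin (N + 1) → ι, walkWeight A w ≤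
        1 - (1 - δ N) * (Sᶜ.card / Fintype.card G) := by
    rw [le_sub_comm]
    refine (hlower Sᶜ N).trans_eq ?_
    rw [eq_sub_iff_add_eq', ← add_div, div_eq_one_iff_eq (htotal N).ne']
    simp only [Finset.mem_compl]
    exact Finset.sum_filter_add_sum_filter_not _ _ _
  have hcompl : (Sᶜ.card : ℝ) / Fintype.card G = 1 - S.card / Fintype.card G := by
    rw [Finset.card_compl, Nat.cast_sub (Finset.card_le_univ S), sub_div, div_self hcard.ne']
  refine tendsto_of_tendsto_of_tendsto_of_le_of_le ?_ ?_ (hlower S) hupper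
  · simpa using (hδ.const_sub 1).mul_const ((S.card : ℝ) / Fintype.card G)
  · simpa [hcompl] using ((hδ.const_sub 1).mul_const ((Sᶜ.card : ℝ) / Fintype.card G)).const_sub 1

end Equidistribution

section SymplecticForm

variable {l R : Type*} [DecidableEq l] [Fintype l] [CommRing R]

/-- The standard symplectic form, with Gram matrix `J l R` in the standard basis. -/
noncomputable def sympForm : (l ⊕ l → R) →ₗ[R] (l ⊕ l → R) →ₗ[R] R :=
  Matrix.toLinearMap₂' R (J l R)

lemma sympForm_eq_dotProduct (x y : l ⊕ l → R) : sympForm x y = x ⬝ᵥ (J l R *ᵥ y) :=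
  Matrix.toLinearMap₂'_apply' _ _ _

lemma sympForm_apply (x y : l ⊕ l → R) :
    sympForm x y = ∑ i, (x (.inr i) * y (.inl i) - x (.inl i) * y (.inr i)) := by
  simp only [sympForm_eq_dotProduct, dotProduct, Fintype.sum_sum_type, J, fromBlocks_mulVec,
    Sum.elim_inl, Sum.elim_inr, zero_mulVec, neg_mulVec, one_mulVec, zero_add, add_zero,
    Pi.neg_apply, Function.comp, ← Finset.sum_add_distrib]
  exact Finset.sum_congr rfl fun i _ => by ring

@[simp]
lemma sympForm_self (x : l ⊕ l → R) : sympForm x x = 0 := by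
  rw [sympForm_apply]
  exact Finset.sum_eq_zero fun i _ => by ring

lemma sympForm_swap (x y : l ⊕ l → R) : sympForm x y = -sympForm y x := by
  simp only [sympForm_apply, ← Finset.sum_neg_distrib]
  exact Finset.sum_congr rfl fun i _ => by ring

@[simp]
lemma sympForm_single_inl (x : l ⊕ l → R) (i : l) :
    sympForm x (Pi.single (.inl i) 1) = x (.inr i) := by
  simp [sympForm_apply, Pi.single_apply]

@[simp]
lemma sympForm_single_inr (x : l ⊕ l → R) (i : l) :
    sympForm x (Pi.single (.inr i) 1) = -x (.inl i) := by
  simp [sympForm_apply, Pi.single_apply]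

lemma exists_sympForm_single_ne_zero {x : l ⊕ l → R} (hx : x ≠ 0) :
    ∃ k, sympForm x (Pi.single k 1) ≠ 0 := by
  obtain ⟨i | i, hi⟩ := Function.ne_iff.1 hx
  · exact ⟨.inr i, by simpa using hi⟩
  · exact ⟨.inl i, by simpa using hi⟩

lemma mem_symplecticGroup_iff {M : Matrix (l ⊕ l) (l ⊕ l) R} :
    M ∈ symplecticGroup l R ↔ ∀ x y, sympForm (M *ᵥ x) (M *ᵥ y) = sympForm x y := by
  have hpullback : ∀ x y, sympForm (M *ᵥ x) (M *ᵥ y) = x ⬝ᵥ ((Mᵀ * J l R * M) *ᵥ y) := by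
    intro x y
    rw [sympForm_eq_dotProduct, ← Matrix.mulVec_mulVec, ← Matrix.mulVec_mulVec,
      Matrix.dotProduct_mulVec x, Matrix.vecMul_transpose]
  rw [SymplecticGroup.mem_iff']
  refine ⟨fun h x y => by rw [hpullback, h, sympForm_eq_dotProduct], fun h => ?_⟩
  ext i j
  have hij := h (Pi.single i 1) (Pi.single j 1)
  rw [hpullback, sympForm_eq_dotProduct] at hij
  simpa using hij

/-- The natural action of the symplectic group on column vectors. -/
instance : DistribMulAction (symplecticGroup l R) (l ⊕ l → R) where
  smul M x := M.1 *ᵥ x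
  one_smul := Matrix.one_mulVec
  mul_smul M N x := (Matrix.mulVec_mulVec x M.1 N.1).symm
  smul_zero M := Matrix.mulVec_zero M.1
  smul_add M := Matrix.mulVec_add M.1

instance : SMulCommClass (symplecticGroup l R) R (l ⊕ l → R) where
  smul_comm M c x := Matrix.mulVec_smul M.1 c x

lemma eq_of_forall_smul_single_eq {M N : symplecticGroup l R}
    (h : ∀ k, M • (Pi.single k 1 : l ⊕ l → R) = N • Pi.single k 1) : M = N :=
  Subtype.ext (Matrix.ext_of_mulVec_single h)

@[simp]
lemma sympForm_smul_smul (M : symplecticGroup l R) (x y : l ⊕ l → R) :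
    sympForm (M • x) (M • y) = sympForm x y :=
  mem_symplecticGroup_iff.1 M.2 x y

end SymplecticForm

section Transvections

variable {l R : Type*} [DecidableEq l] [Fintype l] [CommRing R]

lemma one_add_smul_vecMulVec_mulVec (v : l ⊕ l → R) (a : R) (x : l ⊕ l → R) :
    (1 + a • Matrix.vecMulVec v (J l R *ᵥ v)) *ᵥ x = x + (a * sympForm x v) • v := by
  rw [Matrix.add_mulVec, Matrix.one_mulVec, Matrix.smul_mulVec, Matrix.vecMulVec_mulVec,
    sympForm_eq_dotProduct, dotProduct_comm, op_smul_eq_smul, smul_smul]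

/-- The symplectic transvection `x ↦ x + a ⟨x, v⟩ v`. -/
def sympTransvection (v : l ⊕ l → R) (a : R) : symplecticGroup l R :=
  ⟨1 + a • Matrix.vecMulVec v (J l R *ᵥ v), by
    rw [mem_symplecticGroup_iff]
    intro x y
    simp only [one_add_smul_vecMulVec_mulVec, map_add, LinearMap.add_apply, map_smul,
      LinearMap.smul_apply, smul_eq_mul, sympForm_self, sympForm_swap v y]
    ring⟩

lemma sympTransvection_smul (v : l ⊕ l → R) (a : R) (x : l ⊕ l → R) :
    sympTransvection v a • x = x + (a * sympForm x v) • v :=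
  one_add_smul_vecMulVec_mulVec v a x

@[simp]
lemma sympTransvection_zero_right (v : l ⊕ l → R) : sympTransvection v 0 = 1 :=
  Subtype.ext (by simp [sympTransvection])

@[simp]
lemma sympTransvection_zero_left (a : R) : sympTransvection (0 : l ⊕ l → R) a = 1 :=
  Subtype.ext (by simp [sympTransvection])

lemma sympTransvection_mul_sympTransvection (v : l ⊕ l → R) (a b : R) :
    sympTransvection v a * sympTransvection v b = sympTransvection v (a + b) := by
  refine eq_of_forall_smul_single_eq fun k => ?_
  simp only [mul_smul, sympTransvection_smul, map_add, LinearMap.add_apply, map_smul,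
    LinearMap.smul_apply, smul_eq_mul, sympForm_self]
  module

lemma sympTransvection_smul_left (c : R) (v : l ⊕ l → R) (a : R) :
    sympTransvection (c • v) a = sympTransvection v (c ^ 2 * a) := by
  refine eq_of_forall_smul_single_eq fun k => ?_
  simp only [sympTransvection_smul, map_smul, smul_eq_mul]
  module

lemma mul_sympTransvection_mul_inv (M : symplecticGroup l R) (v : l ⊕ l → R) (a : R) :
    M * sympTransvection v a * M⁻¹ = sympTransvection (M • v) a := by
  rw [mul_inv_eq_iff_eq_mul]
  refine eq_of_forall_smul_single_eq fun k => ?_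
  rw [mul_smul, mul_smul, sympTransvection_smul, sympTransvection_smul, sympForm_smul_smul,
    smul_add, smul_comm]

/-- The group generated by the transvections along the vectors of `U`. -/
def transvectionGroup (U : Submodule R (l ⊕ l → R)) : Subgroup (symplecticGroup l R) :=
  Subgroup.closure {s | ∃ v ∈ U, ∃ a, sympTransvection v a = s}

variable {U V : Submodule R (l ⊕ l → R)} {s : symplecticGroup l R}

lemma sympTransvection_mem_transvectionGroup {v : l ⊕ l → R} (hv : v ∈ U) (a : R) :
    sympTransvection v a ∈ transvectionGroup U :=
  Subgroup.subset_closure ⟨v, hv, a, rfl⟩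

lemma transvectionGroup_mono (h : U ≤ V) : transvectionGroup U ≤ transvectionGroup V :=
  Subgroup.closure_mono fun _ ⟨v, hv, a, ha⟩ => ⟨v, h hv, a, ha⟩

lemma smul_eq_of_mem_transvectionGroup {w : l ⊕ l → R} (hw : ∀ u ∈ U, sympForm w u = 0)
    (hs : s ∈ transvectionGroup U) : s • w = w := by
  suffices h : transvectionGroup U ≤ MulAction.stabilizer (symplecticGroup l R) w from h hs
  refine (Subgroup.closure_le _).2 ?_
  rintro _ ⟨v, hv, a, rfl⟩
  simp [sympTransvection_smul, hw v hv]

lemma smul_sub_self_mem_of_mem_transvectionGroup (hs : s ∈ transvectionGroup U) (x : l ⊕ l → R) :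
    s • x - x ∈ U := by
  induction hs using Subgroup.closure_induction generalizing x with
  | mem _ h =>
    obtain ⟨v, hv, a, rfl⟩ := h
    rw [sympTransvection_smul, add_sub_cancel_left]
    exact U.smul_mem _ hv
  | one => simp
  | mul s r _ _ hs hr =>
    rw [mul_smul, ← sub_add_sub_cancel]
    exact U.add_mem (hs _) (hr x)
  | inv s _ hs => simpa using U.neg_mem (hs (s⁻¹ • x))

lemma smul_mem_of_mem_transvectionGroup (hs : s ∈ transvectionGroup U) {x : l ⊕ l → R}
    (hx : x ∈ U) : s • x ∈ U :=
  (Submodule.sub_mem_iff_left U hx).1 (smul_sub_self_mem_of_mem_transvectionGroup hs x)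

end Transvections

section Transitivity

variable {l F : Type*} [DecidableEq l] [Fintype l] [Field F] {U : Submodule F (l ⊕ l → F)}
  {e f x y : l ⊕ l → F}

lemma sympTransvection_sub_smul (h : sympForm x y ≠ 0) :
    sympTransvection (y - x) (sympForm x y)⁻¹ • x = y := by
  rw [sympTransvection_smul, map_sub, sympForm_self, sub_zero, inv_mul_cancel₀ h, one_smul,
    add_sub_cancel]

lemma exists_transvectionGroup_smul_eq (hU : ∀ x ∈ U, x ≠ 0 → ∃ z ∈ U, sympForm x z ≠ 0)
    (hx : x ∈ U) (hy : y ∈ U) (hx₀ : x ≠ 0) (hy₀ : y ≠ 0) :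
    ∃ s ∈ transvectionGroup U, s • x = y := by
  obtain ⟨z, hz, hxz, hyz⟩ : ∃ z ∈ U, sympForm x z ≠ 0 ∧ sympForm y z ≠ 0 := by
    obtain ⟨z, hz, hxz⟩ := hU x hx hx₀
    obtain ⟨w, hw, hyw⟩ := hU y hy hy₀
    by_cases hyz : sympForm y z = 0
    · by_cases hxw : sympForm x w = 0
      · exact ⟨z + w, U.add_mem hz hw, by simpa [hxw], by simpa [hyz]⟩
      · exact ⟨w, hw, hxw, hyw⟩
    · exact ⟨z, hz, hxz, hyz⟩
  have hzy : sympForm z y ≠ 0 := by rwa [sympForm_swap, neg_ne_zero]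
  refine ⟨sympTransvection (y - z) (sympForm z y)⁻¹ * sympTransvection (z - x) (sympForm x z)⁻¹,
    mul_mem (sympTransvection_mem_transvectionGroup (U.sub_mem hy hz) _)
      (sympTransvection_mem_transvectionGroup (U.sub_mem hz hx) _), ?_⟩
  rw [mul_smul, sympTransvection_sub_smul hxz, sympTransvection_sub_smul hzy]

lemma exists_transvectionGroup_smul_eq_of_sympForm_ne_zero (hx : x ∈ U) (hy : y ∈ U)
    (hxy : sympForm x y ≠ 0) (he : sympForm e x = sympForm e y) :
    ∃ s ∈ transvectionGroup U, s • e = e ∧ s • x = y :=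
  ⟨sympTransvection (y - x) (sympForm x y)⁻¹,
    sympTransvection_mem_transvectionGroup (U.sub_mem hy hx) _,
    by simp [sympTransvection_smul, he], sympTransvection_sub_smul hxy⟩

-- When `⟨x, y⟩ = 0`, go from `x` to `y` through `e + x`.
lemma exists_transvectionGroup_smul_eq_smul_eq (heU : e ∈ U) (hx : x ∈ U) (hy : y ∈ U)
    (hex : sympForm e x ≠ 0) (he : sympForm e x = sympForm e y) :
    ∃ s ∈ transvectionGroup U, s • e = e ∧ s • x = y := by
  by_cases hxy : sympForm x y = 0
  · have hmid : e + x ∈ U := U.add_mem heU hx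
    obtain ⟨s, hs, hse, hsx⟩ := exists_transvectionGroup_smul_eq_of_sympForm_ne_zero (e := e) hx
      hmid (by simpa [sympForm_swap x e] using hex) (by simp)
    obtain ⟨r, hr, hre, hrx⟩ := exists_transvectionGroup_smul_eq_of_sympForm_ne_zero (e := e) hmid
      hy (by simpa [hxy, ← he] using hex) (by simpa using he)
    exact ⟨r * s, mul_mem hr hs, by rw [mul_smul, hse, hre], by rw [mul_smul, hsx, hrx]⟩
  · exact exists_transvectionGroup_smul_eq_of_sympForm_ne_zero hx hy hxy he

lemma exists_transvectionGroup_smul_pair_eq (hU : ∀ x ∈ U, x ≠ 0 → ∃ z ∈ U, sympForm x z ≠ 0)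
    (hx : x ∈ U) (hy : y ∈ U) (he : e ∈ U) (hf : f ∈ U) (hef : sympForm e f ≠ 0)
    (h : sympForm x y = sympForm e f) : ∃ s ∈ transvectionGroup U, s • x = e ∧ s • y = f := by
  have hx₀ : x ≠ 0 := by rintro rfl; simp [hef.symm] at h
  have he₀ : e ≠ 0 := by rintro rfl; simp at hef
  obtain ⟨s, hs, hsx⟩ := exists_transvectionGroup_smul_eq hU hx he hx₀ he₀
  have hform : sympForm e (s • y) = sympForm e f := by rw [← hsx, sympForm_smul_smul, h, hsx]
  obtain ⟨r, hr, hre, hry⟩ := exists_transvectionGroup_smul_eq_smul_eq he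
    (smul_mem_of_mem_transvectionGroup hs hy) hf (hform ▸ hef) hform
  exact ⟨r * s, mul_mem hr hs, by rw [mul_smul, hsx, hre], by rw [mul_smul, hry]⟩

end Transitivity

section Generation

variable {l F : Type*} [DecidableEq l] [Fintype l] [Field F]

/-- The vectors orthogonal to the basis vectors whose index in `l` lies in `s`. -/
def basisOrthogonal (F : Type*) [Field F] (s : Finset l) : Submodule F (l ⊕ l → F) where
  carrier := {x | ∀ k, Sum.elim id id k ∈ s → sympForm x (Pi.single k 1) = 0}
  add_mem' hx hy k hk := by simp [hx k hk, hy k hk]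
  zero_mem' k _ := by simp
  smul_mem' c x hx k hk := by simp [hx k hk]

variable {s : Finset l}

lemma single_mem_basisOrthogonal {k : l ⊕ l} (hk : Sum.elim id id k ∉ s) :
    Pi.single k 1 ∈ basisOrthogonal F s := by
  intro m hm
  obtain i | i := m <;> obtain j | j := k
  case inl.inr | inr.inl =>
    have hij : i ≠ j := by rintro rfl; exact hk hm
    simp [hij]
  all_goals simp

lemma exists_mem_basisOrthogonal_sympForm_ne_zero {x : l ⊕ l → F}
    (hx : x ∈ basisOrthogonal F s) (hx₀ : x ≠ 0) : ∃ z ∈ basisOrthogonal F s, sympForm x z ≠ 0 := by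
  obtain ⟨k, hk⟩ := exists_sympForm_single_ne_zero hx₀
  exact ⟨_, single_mem_basisOrthogonal fun hks => hk (hx k hks), hk⟩

lemma smul_mem_basisOrthogonal {M : symplecticGroup l F}
    (hM : ∀ k, Sum.elim id id k ∈ s → M • (Pi.single k 1 : l ⊕ l → F) = Pi.single k 1)
    {x : l ⊕ l → F} (hx : x ∈ basisOrthogonal F s) : M • x ∈ basisOrthogonal F s := fun k hk => by
  rw [← hM k hk, sympForm_smul_smul, hx k hk]

lemma exists_transvectionGroup_mul_smul_single_eq (M : symplecticGroup l F) (s : Finset l) :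
    ∃ r ∈ transvectionGroup (⊤ : Submodule F (l ⊕ l → F)),
      ∀ k, Sum.elim id id k ∈ s → (r * M) • (Pi.single k 1 : l ⊕ l → F) = Pi.single k 1 := by
  induction s using Finset.induction_on with
  | empty => exact ⟨1, one_mem _, by simp⟩
  | insert q s hq ih =>
    obtain ⟨r, hr, hfix⟩ := ih
    have he : Pi.single (.inl q) 1 ∈ basisOrthogonal F s := single_mem_basisOrthogonal hq
    have hf : Pi.single (.inr q) 1 ∈ basisOrthogonal F s := single_mem_basisOrthogonal hq
    obtain ⟨r', hr', hre, hrf⟩ := exists_transvectionGroup_smul_pair_eq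
      (fun _ => exists_mem_basisOrthogonal_sympForm_ne_zero) (smul_mem_basisOrthogonal hfix he)
      (smul_mem_basisOrthogonal hfix hf) he hf (by simp) (sympForm_smul_smul _ _ _)
    refine ⟨r' * r, mul_mem (transvectionGroup_mono le_top hr') hr, fun k hk => ?_⟩
    rw [mul_assoc, mul_smul]
    rcases Finset.mem_insert.1 hk with hkq | hks
    · obtain k | k := k <;> obtain rfl : k = q := hkq
      exacts [hre, hrf]
    · rw [hfix k hks]
      refine smul_eq_of_mem_transvectionGroup (fun u hu => ?_) hr'
      rw [sympForm_swap, hu k hks, neg_zero]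

theorem transvectionGroup_top : transvectionGroup (⊤ : Submodule F (l ⊕ l → F)) = ⊤ := by
  refine eq_top_iff.2 fun M _ => ?_
  obtain ⟨r, hr, hrM⟩ := exists_transvectionGroup_mul_smul_single_eq M Finset.univ
  have hone : r * M = 1 := eq_of_forall_smul_single_eq fun k => by
    rw [hrM k (Finset.mem_univ _), one_smul]
  rw [eq_inv_of_mul_eq_one_right hone]
  exact inv_mem hr

-- Some `s` maps `v` to `2 v`, and then `⁅s, T⁆` is the transvection along `v` with factor
-- `4 a / 3 - a / 3 = a`, for `T` the one with factor `a / 3`.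
theorem commutator_symplecticGroup_eq_top (h2 : (2 : F) ≠ 0) (h3 : (3 : F) ≠ 0) :
    commutator (symplecticGroup l F) = ⊤ := by
  rw [eq_top_iff, ← transvectionGroup_top, transvectionGroup, Subgroup.closure_le]
  rintro _ ⟨v, -, a, rfl⟩
  rcases eq_or_ne v 0 with rfl | hv
  · simp
  obtain ⟨s, -, hs⟩ := exists_transvectionGroup_smul_eq (U := ⊤) (y := (2 : F) • v)
    (fun x _ hx => (exists_sympForm_single_ne_zero hx).imp' _ fun _ hk => ⟨trivial, hk⟩)
    trivial trivial hv (smul_ne_zero h2 hv)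
  have hcomm : ⁅s, sympTransvection v (a / 3)⁆ = sympTransvection v a := by
    rw [commutatorElement_def, mul_sympTransvection_mul_inv, hs, sympTransvection_smul_left,
      mul_inv_eq_iff_eq_mul, sympTransvection_mul_sympTransvection]
    congr 1
    field_simp
    ring
  rw [← hcomm]
  exact Subgroup.commutator_mem_commutator (Subgroup.mem_top _) (Subgroup.mem_top _)

lemma commutator_pi_eq_top {ι : Type*} [Finite ι] {G : ι → Type*} [∀ i, Group (G i)]
    (h : ∀ i, commutator (G i) = ⊤) : commutator (∀ i, G i) = ⊤ := by
  simp only [commutator_def] at h ⊢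
  rw [← Subgroup.pi_top Set.univ, Subgroup.commutator_pi_pi_of_finite]
  simp only [h, Subgroup.pi_top]

end Generation

section Reduction

variable {l R S : Type*} [DecidableEq l] [Fintype l] [CommRing R] [CommRing S]

/-- The homomorphism of symplectic groups obtained by applying `f` to the matrix entries. -/
def symplecticMap (l : Type*) [DecidableEq l] [Fintype l] (f : R →+* S) :
    symplecticGroup l R →* symplecticGroup l S where
  toFun M := ⟨M.1.map f, SymplecticGroup.map_mem M.2 f⟩
  map_one' := Subtype.ext (Matrix.map_one f (map_zero f) (map_one f))
  map_mul' _ _ := Subtype.ext Matrix.map_mul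

lemma symplecticMap_sympTransvection (f : R →+* S) (v : l ⊕ l → R) (a : R) :
    symplecticMap l f (sympTransvection v a) = sympTransvection (f ∘ v) (f a) := by
  have hJ : f ∘ (J l R *ᵥ v) = J l S *ᵥ (f ∘ v) := by
    rw [← Matrix.map_J l f]
    exact funext fun i => RingHom.map_mulVec f _ _ i
  refine Subtype.ext ?_
  change (1 + a • vecMulVec v (J l R *ᵥ v)).map f = 1 + f a • vecMulVec (f ∘ v) (J l S *ᵥ (f ∘ v))
  rw [← hJ]
  ext i j
  simp [Matrix.one_apply, apply_ite f, vecMulVec_apply]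

/-- Simultaneous reduction modulo the members of `s`. -/
def reductionMod (l : Type*) [DecidableEq l] [Fintype l] (s : Finset ℕ) :
    symplecticGroup l ℤ →* ∀ p : s, symplecticGroup l (ZMod p) :=
  MonoidHom.pi fun p => symplecticMap l (Int.castRingHom (ZMod p))

lemma exists_reductionMod_eq_mulSingle {s : Finset ℕ} (hs : ∀ p ∈ s, p.Prime) (p : s)
    (v : l ⊕ l → ZMod p) (a : ZMod p) :
    ∃ M, reductionMod l s M = Pi.mulSingle p (sympTransvection v a) := by
  have : Fact (p : ℕ).Prime := ⟨hs p p.2⟩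
  set Q : ℕ := ∏ q ∈ s.erase p, q
  have hQ : (Q : ZMod p) ≠ 0 := by
    rw [Ne, ZMod.natCast_eq_zero_iff, Prime.dvd_finsetProd_iff (hs p p.2).prime]
    rintro ⟨q, hq, hpq⟩
    have hqs := Finset.mem_erase.1 hq
    exact hqs.1 ((Nat.prime_dvd_prime_iff_eq (hs p p.2) (hs q hqs.2)).1 hpq).symm
  obtain ⟨b, hb⟩ := ZMod.intCast_surjective (a / (Q : ZMod p))
  choose w hw using fun k => ZMod.intCast_surjective (v k)
  refine ⟨sympTransvection w (b * Q), funext fun q => ?_⟩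
  change symplecticMap l (Int.castRingHom (ZMod q)) _ = _
  rw [symplecticMap_sympTransvection]
  obtain rfl | hqp := eq_or_ne q p
  · have hv : Int.castRingHom (ZMod q) ∘ w = v := funext hw
    rw [hv]
    simp [hb, hQ]
  · have hQq : (Q : ZMod q) = 0 := (ZMod.natCast_eq_zero_iff _ _).2 <|
      Finset.dvd_prod_of_mem _ (Finset.mem_erase.2 ⟨Subtype.coe_ne_coe.2 hqp, q.2⟩)
    simp [hQq, hqp]

theorem reductionMod_surjective {s : Finset ℕ} (hs : ∀ p ∈ s, p.Prime) :
    Function.Surjective (reductionMod l s) := by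
  have hfactor : Subgroup.pi Set.univ (fun p : s => (⊤ : Subgroup (symplecticGroup l (ZMod p)))) ≤
      (reductionMod l s).range := by
    refine Subgroup.pi_le_iff.2 fun p => ?_
    have : Fact (p : ℕ).Prime := ⟨hs p p.2⟩
    rw [Subgroup.map_le_iff_le_comap, ← transvectionGroup_top, transvectionGroup,
      Subgroup.closure_le]
    rintro _ ⟨v, -, a, rfl⟩
    exact exists_reductionMod_eq_mulSingle hs p v a
  rw [← MonoidHom.range_eq_top, eq_top_iff, ← Subgroup.pi_top Set.univ]
  exact hfactor

end Reduction

section SymplecticBasis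

variable {l F V : Type*} [DecidableEq l] [Field F] [AddCommGroup V] [Module F V]
  {B : V →ₗ[F] V →ₗ[F] F} {f : l ⊕ l → V}

/-- A family of vectors whose Gram matrix for the bilinear form `B` is that of the standard
symplectic form. -/
def IsSymplecticFamily (B : V →ₗ[F] V →ₗ[F] F) (f : l ⊕ l → V) : Prop :=
  ∀ i j, B (f i) (f j) = J l F i j

namespace IsSymplecticFamily

lemma comp_map {m : Type*} [DecidableEq m] (hf : IsSymplecticFamily B f) (σ : m ≃ l) :
    IsSymplecticFamily B (f ∘ Sum.map σ σ) := by
  rintro (i | i) (j | j) <;> simp [hf _ _, J, Matrix.one_apply]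

lemma cons {n : ℕ} {f : Fin n ⊕ Fin n → V} {x y : V} (hf : IsSymplecticFamily B f)
    (hB : B.IsAlt) (hx : ∀ k, B x (f k) = 0) (hy : ∀ k, B y (f k) = 0) (hxy : B x y = 1) :
    IsSymplecticFamily B
      (Sum.elim (Fin.cons y (f ∘ Sum.inl)) (Fin.cons x (f ∘ Sum.inr) : Fin (n + 1) → V)) := by
  have hyx : B y x = -1 := by rw [← hB.neg, hxy]
  have hfx : ∀ k, B (f k) x = 0 := fun k => hB.eq_iff.1 (hx k)
  have hfy : ∀ k, B (f k) y = 0 := fun k => hB.eq_iff.1 (hy k)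
  rintro (i | i) (j | j) <;> cases i using Fin.cases <;> cases j using Fin.cases <;>
    simp [hB.self_eq_zero, hx, hy, hxy, hyx, hfx, hfy, hf _ _, J, Matrix.one_apply,
      Fin.succ_ne_zero, (Fin.succ_ne_zero _).symm]

lemma apply_sum_smul_sum_smul [Fintype l] (hf : IsSymplecticFamily B f) (c d : l ⊕ l → F) :
    B (∑ i, c i • f i) (∑ j, d j • f j) = sympForm c d := by
  simp only [map_sum, LinearMap.sum_apply, map_smul, LinearMap.smul_apply, smul_eq_mul, hf _ _,
    sympForm_eq_dotProduct, dotProduct, mulVec, Finset.mul_sum]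
  rw [Finset.sum_comm]
  exact Finset.sum_congr rfl fun i _ => Finset.sum_congr rfl fun j _ => by ring

lemma linearIndependent [Finite l] (hf : IsSymplecticFamily B f) : LinearIndependent F f := by
  cases nonempty_fintype l
  rw [Fintype.linearIndependent_iff]
  intro c hc
  by_contra! hne
  obtain ⟨k, hk⟩ := exists_sympForm_single_ne_zero (Function.ne_iff.2 hne)
  exact hk (by rw [← hf.apply_sum_smul_sum_smul, hc, map_zero, LinearMap.zero_apply])

lemma exists_mem_span_sub_orthogonal [Finite l] (hf : IsSymplecticFamily B f) (v : V) :
    ∃ w ∈ Submodule.span F (Set.range f), ∀ k, B (v - w) (f k) = 0 := by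
  cases nonempty_fintype l
  let c : l ⊕ l → F := Sum.elim (fun i => -B v (f (.inr i))) fun i => B v (f (.inl i))
  refine ⟨∑ i, c i • f i, Submodule.sum_mem _ fun i _ =>
    Submodule.smul_mem _ _ (Submodule.subset_span ⟨i, rfl⟩), fun k => ?_⟩
  have hk : B (∑ i, c i • f i) (f k) = sympForm c (Pi.single k 1) := by
    rw [← hf.apply_sum_smul_sum_smul]
    simp [Pi.single_apply]
  rw [map_sub, LinearMap.sub_apply, hk, sub_eq_zero]
  obtain k | k := k <;> simp [c]

lemma exists_orthogonal_ne_zero [Fintype l] [FiniteDimensional F V]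
    (hf : IsSymplecticFamily B f) (hcard : 2 * Fintype.card l < Module.finrank F V) :
    ∃ x, x ≠ 0 ∧ ∀ k, B x (f k) = 0 := by
  have hspan : Submodule.span F (Set.range f) ≠ ⊤ := fun htop => by
    have hrank := finrank_span_eq_card hf.linearIndependent
    rw [htop, finrank_top, Fintype.card_sum] at hrank
    lia
  obtain ⟨v, -, hv⟩ := SetLike.exists_of_lt hspan.lt_top
  obtain ⟨w, hw, hvw⟩ := hf.exists_mem_span_sub_orthogonal v
  exact ⟨v - w, sub_ne_zero.2 fun h => hv (h ▸ hw), hvw⟩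

lemma exists_orthogonal_apply_eq_one [Finite l] (hf : IsSymplecticFamily B f)
    (hB : B.SeparatingLeft) {x : V} (hx₀ : x ≠ 0) (hx : ∀ k, B x (f k) = 0) :
    ∃ y, B x y = 1 ∧ ∀ k, B y (f k) = 0 := by
  obtain ⟨u, hu⟩ : ∃ u, B x u ≠ 0 := by
    by_contra! h
    exact hx₀ (hB x h)
  obtain ⟨w, hw, huw⟩ := hf.exists_mem_span_sub_orthogonal u
  have hxw : B x w = 0 := by
    have hle : Submodule.span F (Set.range f) ≤ LinearMap.ker (B x) :=
      Submodule.span_le.2 (Set.range_subset_iff.2 hx)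
    exact hle hw
  exact ⟨(B x u)⁻¹ • (u - w), by simp [hxw, hu], fun k => by simp [-map_sub, huw k]⟩

end IsSymplecticFamily

lemma exists_isSymplecticFamily_fin [FiniteDimensional F V] (halt : B.IsAlt)
    (hsep : B.SeparatingLeft) (n : ℕ) (hn : 2 * n ≤ Module.finrank F V) :
    ∃ f : Fin n ⊕ Fin n → V, IsSymplecticFamily B f := by
  induction n with
  | zero => exact ⟨isEmptyElim, isEmptyElim⟩
  | succ n ih =>
    obtain ⟨f, hf⟩ := ih (by lia)
    obtain ⟨x, hx₀, hx⟩ := hf.exists_orthogonal_ne_zero (by rw [Fintype.card_fin]; lia)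
    obtain ⟨y, hxy, hy⟩ := hf.exists_orthogonal_apply_eq_one hsep hx₀ hx
    exact ⟨_, hf.cons halt hx hy hxy⟩

theorem exists_basis_apply_eq_sympForm_repr [FiniteDimensional F V] [Fintype l] [Nonempty l]
    (halt : B.IsAlt) (hsep : B.SeparatingLeft) (hrank : Module.finrank F V = 2 * Fintype.card l) :
    ∃ b : Module.Basis (l ⊕ l) F V, ∀ x y, B x y = sympForm ⇑(b.repr x) ⇑(b.repr y) := by
  obtain ⟨f₀, hf₀⟩ := exists_isSymplecticFamily_fin halt hsep (Fintype.card l) hrank.ge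
  have hf := hf₀.comp_map (Fintype.equivFin l)
  let b := basisOfLinearIndependentOfCardEqFinrank hf.linearIndependent
    (by rw [Fintype.card_sum, hrank, two_mul])
  have hb : ⇑b = f₀ ∘ Sum.map (Fintype.equivFin l) (Fintype.equivFin l) :=
    coe_basisOfLinearIndependentOfCardEqFinrank _ _
  refine ⟨b, fun x y => ?_⟩
  rw [← hf.apply_sum_smul_sum_smul, ← hb, b.sum_repr, b.sum_repr]

end SymplecticBasis

section TwistedTraceForm

variable {F K : Type*} [Field F] [Field K] [Algebra F K] {σ : K ≃ₐ[F] K} {δ : K}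

/-- The bilinear form `(x, y) ↦ tr(δ x σ(y))`. For an involution `σ` with `σ δ = -δ` it is
alternating, and multiplication by `y` preserves it exactly when `y σ(y) = 1`. -/
noncomputable def twistedTraceForm (σ : K ≃ₐ[F] K) (δ : K) : K →ₗ[F] K →ₗ[F] F :=
  (Algebra.traceForm F K).compl₁₂ (LinearMap.mulLeft F δ) σ.toLinearMap

lemma twistedTraceForm_apply (x y : K) :
    twistedTraceForm σ δ x y = Algebra.trace F K (δ * x * σ y) := rfl

lemma twistedTraceForm_isAlt (h2 : (2 : F) ≠ 0) (hσ : Function.Involutive σ) (hδ : σ δ = -δ) :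
    (twistedTraceForm σ δ).IsAlt := fun x => by
  have hneg : twistedTraceForm σ δ x x = -twistedTraceForm σ δ x x := calc
    twistedTraceForm σ δ x x = Algebra.trace F K (σ (δ * x * σ x)) :=
      (Algebra.trace_eq_of_algEquiv σ _).symm
    _ = Algebra.trace F K (-(δ * x * σ x)) := by
      congr 1
      rw [map_mul, map_mul, hσ, hδ]
      ring
    _ = -twistedTraceForm σ δ x x := map_neg _ _
  refine (mul_eq_zero.1 ?_).resolve_left h2
  linear_combination hneg

lemma exists_ne_zero_map_eq_neg (hσ : Function.Involutive σ) (hσ₁ : σ ≠ 1) :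
    ∃ δ, δ ≠ 0 ∧ σ δ = -δ := by
  obtain ⟨y, hy⟩ := DFunLike.ne_iff.1 hσ₁
  exact ⟨σ y - y, sub_ne_zero.2 hy, by rw [map_sub, hσ, neg_sub]⟩

variable [FiniteDimensional F K] [Algebra.IsSeparable F K]

lemma eq_zero_of_forall_twistedTraceForm_eq_zero (hδ : δ ≠ 0) {x : K}
    (hx : ∀ y, twistedTraceForm σ δ x y = 0) : x = 0 := by
  refine (mul_eq_zero.1 ((traceForm_nondegenerate F K).1 (δ * x) fun z => ?_)).resolve_left hδ
  simpa [twistedTraceForm_apply] using hx (σ.symm z)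

lemma twistedTraceForm_mul_mul_iff (hδ : δ ≠ 0) {y : K} :
    (∀ z w, twistedTraceForm σ δ (y * z) (y * w) = twistedTraceForm σ δ z w) ↔ y * σ y = 1 := by
  have hmul : ∀ z w, twistedTraceForm σ δ (y * z) (y * w) =
      twistedTraceForm σ δ (y * σ y * z) w := fun z w => by
    simp only [twistedTraceForm_apply, map_mul]
    congr 1
    ring
  refine ⟨fun h => ?_, fun h z w => by rw [hmul, h, one_mul]⟩
  rw [← sub_eq_zero]
  refine eq_zero_of_forall_twistedTraceForm_eq_zero (F := F) (σ := σ) hδ fun w => ?_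
  rw [map_sub, LinearMap.sub_apply, sub_eq_zero, ← h 1 w, hmul, mul_one]

end TwistedTraceForm

section NormOneTorus

variable {F K : Type*} [Field F] [Field K] [Algebra F K]

lemma card_nthRootsFinset_one_of_dvd [Finite K] {n : ℕ} (hn : n ∣ Nat.card K - 1) :
    (nthRootsFinset n (1 : K)).card = n := by
  obtain ⟨z, hz⟩ := IsCyclic.exists_ofOrder_eq_natCard (α := Kˣ)
  have hprim : IsPrimitiveRoot (z : K) (Nat.card Kˣ) := by
    rw [← hz, IsPrimitiveRoot.coe_units_iff]
    exact IsPrimitiveRoot.orderOf z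
  rw [← Nat.card_units] at hn
  exact (hprim.pow Nat.card_pos (Nat.div_mul_cancel hn).symm).card_nthRootsFinset

open scoped IntermediateField

variable {m : ℕ}

lemma finrank_adjoin_le_of_ne_top [FiniteDimensional F K] (hK : Module.finrank F K = 2 * m) {x : K}
    (hx : F⟮x⟯ ≠ ⊤) : Module.finrank F F⟮x⟯ ≤ m := by
  have hmul := Module.finrank_mul_finrank F F⟮x⟯ K
  have hpos : 0 < Module.finrank F⟮x⟯ K := Module.finrank_pos
  have hne : Module.finrank F⟮x⟯ K ≠ 1 := fun h =>
    hx (IntermediateField.finrank_eq_one_iff_eq_top.1 h)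
  nlinarith [show 2 ≤ Module.finrank F⟮x⟯ K by lia]

variable [Fintype F]

lemma pow_card_pow_finrank_adjoin_eq [FiniteDimensional F K] (x : K) :
    x ^ Fintype.card F ^ Module.finrank F F⟮x⟯ = x := by
  have : Fintype F⟮x⟯ := @Fintype.ofFinite _ (Module.finite_of_finite F)
  rw [← Module.card_eq_pow_finrank (K := F) (V := F⟮x⟯)]
  have hx : x ∈ F⟮x⟯ := IntermediateField.mem_adjoin_simple_self F x
  exact congrArg Subtype.val (FiniteField.pow_card (⟨x, hx⟩ : F⟮x⟯))

lemma exists_involutive_algEquiv_eq_pow [Finite K] (hm : m ≠ 0)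
    (hK : Module.finrank F K = 2 * m) :
    ∃ σ : K ≃ₐ[F] K, Function.Involutive σ ∧ σ ≠ 1 ∧ ∀ x, σ x = x ^ Fintype.card F ^ m := by
  have : FiniteDimensional F K := .of_finite
  set φ := FiniteField.frobeniusAlgEquivOfAlgebraic F K
  have hφ : orderOf φ = 2 * m := (FiniteField.orderOf_frobeniusAlgEquivOfAlgebraic F K).trans hK
  refine ⟨φ ^ m, DFunLike.congr_fun (?_ : φ ^ m * φ ^ m = 1), pow_ne_one_of_lt_orderOf hm (by lia),
    fun x => ?_⟩
  · rw [← pow_add, ← two_mul, ← hφ, pow_orderOf_eq_one]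
  · rw [AlgEquiv.coe_pow, FiniteField.coe_frobeniusAlgEquivOfAlgebraic_iterate]

open scoped Classical in
lemma filter_adjoin_ne_top_subset [FiniteDimensional F K] (hK : Module.finrank F K = 2 * m) :
    {x ∈ nthRootsFinset (Fintype.card F ^ m + 1) (1 : K) | F⟮x⟯ ≠ ⊤} ⊆
      nthRootsFinset 2 1 ∪
        (Finset.Ico 1 m).biUnion fun d => (X ^ Fintype.card F ^ d - X : K[X]).roots.toFinset := by
  intro x hx
  obtain ⟨hroot, htop⟩ := Finset.mem_filter.1 hx
  rw [mem_nthRootsFinset (Nat.succ_pos _)] at hroot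
  have hfix := pow_card_pow_finrank_adjoin_eq (F := F) x
  obtain hd | hd := (finrank_adjoin_le_of_ne_top hK htop).eq_or_lt
  · rw [hd] at hfix
    refine Finset.mem_union_left _ ((mem_nthRootsFinset two_pos _).2 ?_)
    rwa [pow_succ, hfix, ← pow_two] at hroot
  · refine Finset.mem_union_right _ (Finset.mem_biUnion.2
      ⟨_, Finset.mem_Ico.2 ⟨Module.finrank_pos, hd⟩, ?_⟩)
    rw [Multiset.mem_toFinset, mem_roots (FiniteField.X_pow_card_pow_sub_X_ne_zero K
      Module.finrank_pos.ne' Fintype.one_lt_card)]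
    simp [hfix]

open scoped Classical in
lemma card_filter_adjoin_ne_top_le [FiniteDimensional F K] (hK : Module.finrank F K = 2 * m) :
    Finset.card {x ∈ nthRootsFinset (Fintype.card F ^ m + 1) (1 : K) | F⟮x⟯ ≠ ⊤} ≤
      2 + ∑ d ∈ Finset.Ico 1 m, Fintype.card F ^ d := by
  refine (Finset.card_le_card (filter_adjoin_ne_top_subset hK)).trans
    ((Finset.card_union_le _ _).trans ?_)
  gcongr
  · exact (Multiset.toFinset_card_le _).trans (card_nthRoots 2 1)
  · refine Finset.card_biUnion_le.trans (Finset.sum_le_sum fun d hd => ?_)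
    refine (Multiset.toFinset_card_le _).trans ((card_roots' _).trans_eq ?_)
    exact FiniteField.X_pow_card_pow_sub_X_natDegree_eq K
      (Nat.one_le_iff_ne_zero.1 (Finset.mem_Ico.1 hd).1) Fintype.one_lt_card

open scoped Classical in
theorem card_pow_add_one_le_two_mul_card_filter_adjoin_eq_top [Finite K] (hm : m ≠ 0)
    (hF : 3 ≤ Fintype.card F) (hK : Module.finrank F K = 2 * m) :
    Fintype.card F ^ m + 1 ≤
      2 * Finset.card {x ∈ nthRootsFinset (Fintype.card F ^ m + 1) (1 : K) | F⟮x⟯ = ⊤} := by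
  have : FiniteDimensional F K := .of_finite
  have hcard : Finset.card (nthRootsFinset (Fintype.card F ^ m + 1) (1 : K)) =
      Fintype.card F ^ m + 1 := by
    refine card_nthRootsFinset_one_of_dvd ?_
    rw [Module.natCard_eq_pow_finrank (K := F), hK, Nat.card_eq_fintype_card, mul_comm, pow_mul]
    exact ⟨_, Nat.sq_sub_sq _ 1⟩
  have hsplit := Finset.card_filter_add_card_filter_not
    (s := nthRootsFinset (Fintype.card F ^ m + 1) (1 : K)) (fun x => F⟮x⟯ = ⊤)
  have hbad := card_filter_adjoin_ne_top_le hK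
  have hgeom : 2 * ∑ d ∈ Finset.range m, Fintype.card F ^ d ≤ Fintype.card F ^ m - 1 := by
    rw [Nat.geomSum_eq (by lia)]
    exact (Nat.mul_le_mul_right _ (by lia)).trans (Nat.mul_div_le _ _)
  have hIco : ∑ d ∈ Finset.range m, Fintype.card F ^ d =
      1 + ∑ d ∈ Finset.Ico 1 m, Fintype.card F ^ d := by
    rw [Finset.range_eq_Ico, Finset.sum_eq_sum_Ico_succ_bot (Nat.pos_of_ne_zero hm), pow_zero]
  have hpos : 0 < Fintype.card F ^ m := Nat.pow_pos Fintype.card_pos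
  lia

end NormOneTorus

section ConjugacyCount

variable {G κ : Type*} [Group G] [Fintype G] [DecidableEq G]

lemma card_centralizer_mul_card_filter_isConj (a : G) :
    Nat.card (Subgroup.centralizer {a}) * Finset.card {y | IsConj a y} = Fintype.card G := by
  have horbit : MulAction.orbit (ConjAct G) a = {y | IsConj a y} := by
    ext y
    rw [ConjAct.mem_orbit_conjAct, isConj_comm, Set.mem_ofPred_eq]
  rw [Subgroup.nat_card_centralizer_nat_card_stabilizer, mul_comm, ← Fintype.card_subtype,
    ← ConjAct.card (G := G), ← Nat.card_eq_fintype_card, ← Nat.card_eq_fintype_card,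
    ← Nat.card_congr (MulAction.orbitProdStabilizerEquivGroup (ConjAct G) a), Nat.card_prod, horbit]
  rfl

lemma card_mul_card_le_of_isConj_mem [Fintype κ] (a : κ → G) (S : Finset G) {c d : ℕ}
    (hS : ∀ x y, IsConj (a x) y → y ∈ S)
    (hc : ∀ x, Nat.card (Subgroup.centralizer {a x}) ≤ c)
    (hd : ∀ y ∈ S, Finset.card {x | IsConj (a x) y} ≤ d) :
    Fintype.card G * Fintype.card κ ≤ c * (d * S.card) := by
  let r : κ → G → Prop := fun x y => IsConj (a x) y
  have habove (x : κ) : Fintype.card G ≤ c * (S.bipartiteAbove r x).card := by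
    rw [← card_centralizer_mul_card_filter_isConj (a x)]
    gcongr
    · exact hc x
    · exact fun y hy => Finset.mem_filter.2
        ⟨hS x y (Finset.mem_filter.1 hy).2, (Finset.mem_filter.1 hy).2⟩
  calc Fintype.card G * Fintype.card κ = ∑ _x : κ, Fintype.card G := by simp [mul_comm]
    _ ≤ ∑ x, c * (S.bipartiteAbove r x).card := Finset.sum_le_sum fun x _ => habove x
    _ = c * ∑ y ∈ S, (Finset.univ.bipartiteBelow r y).card := by
      rw [← Finset.mul_sum, Finset.sum_card_bipartiteAbove_eq_sum_card_bipartiteBelow]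
    _ ≤ c * (d * S.card) := by
      rw [mul_comm d, ← smul_eq_mul S.card]
      exact Nat.mul_le_mul_left c (Finset.sum_le_card_nsmul _ _ _ hd)

end ConjugacyCount

section LeftMulMatrix

variable {R S n : Type*} [CommRing R] [CommRing S] [Algebra R S] [Fintype n] [DecidableEq n]

lemma exists_leftMulMatrix_eq_of_commute (b : Module.Basis n R S) {x : S}
    (hx : Algebra.adjoin R {x} = ⊤) {M : Matrix n n R}
    (hM : Commute M (Algebra.leftMulMatrix b x)) :
    ∃ y, Algebra.leftMulMatrix b y = M := by
  have hall (z : S) : M * Algebra.leftMulMatrix b z = Algebra.leftMulMatrix b z * M := by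
    refine Algebra.commute_of_mem_adjoin_singleton_of_commute (R := R)
      (b := Algebra.leftMulMatrix b x) ?_ hM
    rw [← AlgHom.map_adjoin_singleton, hx]
    exact ⟨z, trivial, rfl⟩
  have hrepr (v : n → R) : ∃ z, ⇑(b.repr z) = v := b.equivFun.surjective v
  obtain ⟨y, hy⟩ := hrepr (M *ᵥ b.repr 1)
  refine ⟨y, Matrix.ext_of_mulVec_single fun i => ?_⟩
  obtain ⟨z, hz⟩ := hrepr (Pi.single i 1)
  rw [← hz]
  calc Algebra.leftMulMatrix b y *ᵥ b.repr z = Algebra.leftMulMatrix b z *ᵥ b.repr y := by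
        rw [Algebra.leftMulMatrix_mulVec_repr, Algebra.leftMulMatrix_mulVec_repr, mul_comm]
    _ = M *ᵥ (Algebra.leftMulMatrix b z *ᵥ b.repr 1) := by
        rw [hy, Matrix.mulVec_mulVec, ← hall, Matrix.mulVec_mulVec]
    _ = M *ᵥ b.repr z := by rw [Algebra.leftMulMatrix_mulVec_repr, mul_one]

lemma leftMulMatrix_mem_symplecticGroup_iff {l : Type*} [Fintype l] [DecidableEq l]
    {B : S →ₗ[R] S →ₗ[R] R} (b : Module.Basis (l ⊕ l) R S)
    (hb : ∀ x y, B x y = sympForm ⇑(b.repr x) ⇑(b.repr y)) {x : S} :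
    Algebra.leftMulMatrix b x ∈ symplecticGroup l R ↔ ∀ z w, B (x * z) (x * w) = B z w := by
  simp only [mem_symplecticGroup_iff, hb, ← Algebra.leftMulMatrix_mulVec_repr]
  refine ⟨fun h z w => h _ _, fun h v w => ?_⟩
  obtain ⟨z, rfl⟩ := b.equivFun.surjective v
  obtain ⟨w, rfl⟩ := b.equivFun.surjective w
  exact h z w

end LeftMulMatrix

section IrreducibleCount

open scoped IntermediateField

lemma charpoly_leftMulMatrix_of_adjoin_eq_top {F K n : Type*} [Field F] [Field K] [Algebra F K]
    [Fintype n] [DecidableEq n] (b : Module.Basis n F K) {x : K} (hx : F⟮x⟯ = ⊤) :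
    (Algebra.leftMulMatrix b x).charpoly = minpoly F x := by
  have : FiniteDimensional F K := b.finiteDimensional_of_finite
  have hroot : aeval x (Algebra.leftMulMatrix b x).charpoly = 0 := by
    apply Algebra.leftMulMatrix_injective b
    rw [← Polynomial.aeval_algHom_apply, Matrix.aeval_self_charpoly, map_zero]
  refine eq_of_monic_of_dvd_of_natDegree_le (minpoly.monic (.of_finite F x))
    (Matrix.charpoly_monic _) (minpoly.dvd F x hroot) ?_
  rw [Matrix.charpoly_natDegree_eq_dim,
    (Field.primitive_element_iff_minpoly_natDegree_eq F x).1 hx, Module.finrank_eq_card_basis b]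

variable {l : Type*} [Fintype l] [DecidableEq l]

lemma charpoly_eq_of_isConj {R : Type*} [CommRing R] {M N : symplecticGroup l R}
    (h : IsConj M N) : M.1.charpoly = N.1.charpoly := by
  obtain ⟨c, rfl⟩ := isConj_iff.1 h
  rw [← Matrix.charpoly_units_conj (Units.map (symplecticGroup l R).subtype (toUnits c)) M.1,
    ← Matrix.coe_units_inv]
  rfl

variable {F K : Type*} [Field F] [Field K] [Algebra F K]

lemma card_centralizer_le_of_coe_eq_leftMulMatrix {n : ℕ} (hn : 0 < n)
    {b : Module.Basis (l ⊕ l) F K}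
    (hb : ∀ x, Algebra.leftMulMatrix b x ∈ symplecticGroup l F → x ^ n = 1)
    {M : symplecticGroup l F} {x : K} (hx : F⟮x⟯ = ⊤) (hM : M.1 = Algebra.leftMulMatrix b x) :
    Nat.card (Subgroup.centralizer {M}) ≤ n := by
  have : FiniteDimensional F K := b.finiteDimensional_of_finite
  have hadjoin : Algebra.adjoin F {x} = ⊤ := IntermediateField.adjoin_eq_top_iff.1 hx
  have hex (C : Subgroup.centralizer {M}) : ∃ y, Algebra.leftMulMatrix b y = C.1.1 :=
    exists_leftMulMatrix_eq_of_commute b hadjoin <| hM ▸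
      congrArg Subtype.val (Subgroup.mem_centralizer_singleton_iff.1 C.2)
  choose f hf using hex
  have hf_inj : Function.Injective f := fun C D h =>
    Subtype.ext (Subtype.ext (by rw [← hf, h, hf]))
  have hf_mem (C : Subgroup.centralizer {M}) : f C ∈ nthRootsFinset n (1 : K) :=
    (mem_nthRootsFinset hn _).2 (hb _ (by rw [hf]; exact C.1.2))
  classical
  calc Nat.card (Subgroup.centralizer {M}) ≤ Nat.card (nthRootsFinset n (1 : K)) :=
        Nat.card_le_card_of_injective (fun C => ⟨f C, hf_mem C⟩) fun C D h =>
          hf_inj (congrArg Subtype.val h)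
    _ = (nthRootsFinset n (1 : K)).card := Nat.card_eq_fintype_card.trans (Fintype.card_coe _)
    _ ≤ n := (Multiset.toFinset_card_le _).trans (card_nthRoots n 1)

lemma card_le_natDegree_of_aeval_eq_zero {p : F[X]} (hp : p ≠ 0) {s : Finset K}
    (hs : ∀ x ∈ s, aeval x p = 0) : s.card ≤ p.natDegree := by
  rw [← natDegree_map (algebraMap F K)]
  refine card_le_degree_of_subset_roots fun x hx => ?_
  rw [mem_roots (map_ne_zero hp), IsRoot.def, eval_map_algebraMap, hs x hx]

lemma exists_basis_leftMulMatrix_mem_symplecticGroup_iff [Fintype F] [Finite K] [Nonempty l]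
    (h2 : (2 : F) ≠ 0) (hK : Module.finrank F K = 2 * Fintype.card l) :
    ∃ b : Module.Basis (l ⊕ l) F K, ∀ x, Algebra.leftMulMatrix b x ∈ symplecticGroup l F ↔
      x ^ (Fintype.card F ^ Fintype.card l + 1) = 1 := by
  have : FiniteDimensional F K := .of_finite
  obtain ⟨σ, hσ, hσ₁, hσ_apply⟩ := exists_involutive_algEquiv_eq_pow Fintype.card_ne_zero hK
  obtain ⟨δ, hδ, hσδ⟩ := exists_ne_zero_map_eq_neg hσ hσ₁
  obtain ⟨b, hb⟩ := exists_basis_apply_eq_sympForm_repr (twistedTraceForm_isAlt h2 hσ hσδ)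
    (fun _ => eq_zero_of_forall_twistedTraceForm_eq_zero hδ) hK
  refine ⟨b, fun x => ?_⟩
  rw [leftMulMatrix_mem_symplecticGroup_iff b hb, twistedTraceForm_mul_mul_iff hδ, hσ_apply,
    pow_succ']

open scoped Classical in
lemma card_symplecticGroup_mul_card_le [Fintype (symplecticGroup l F)] {n : ℕ} (hn : 0 < n)
    {b : Module.Basis (l ⊕ l) F K}
    (hb : ∀ x, Algebra.leftMulMatrix b x ∈ symplecticGroup l F ↔ x ^ n = 1) {T : Finset K}
    (hT : ∀ x ∈ T, x ^ n = 1 ∧ F⟮x⟯ = ⊤) :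
    Fintype.card (symplecticGroup l F) * T.card ≤ n * (2 * Fintype.card l *
      Finset.card {M : symplecticGroup l F | Irreducible M.1.charpoly}) := by
  let a : T → symplecticGroup l F := fun x =>
    ⟨Algebra.leftMulMatrix b x, (hb x).2 (hT x x.2).1⟩
  have hcharpoly (x : T) (M : symplecticGroup l F) (h : IsConj (a x) M) :
      M.1.charpoly = minpoly F x.1 := by
    rw [← charpoly_eq_of_isConj h, ← charpoly_leftMulMatrix_of_adjoin_eq_top b (hT x x.2).2]
  have : FiniteDimensional F K := b.finiteDimensional_of_finite
  rw [← Fintype.card_coe T]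
  refine card_mul_card_le_of_isConj_mem a _ (fun x M h => ?_)
    (fun x => card_centralizer_le_of_coe_eq_leftMulMatrix hn (fun x => (hb x).1) (hT x x.2).2 rfl)
    (fun M _ => ?_)
  · rw [Finset.mem_filter_univ, hcharpoly x M h]
    exact minpoly.irreducible (.of_finite F x.1)
  · rw [← Finset.card_image_of_injective _ Subtype.val_injective]
    refine (card_le_natDegree_of_aeval_eq_zero (Matrix.charpoly_monic M.1).ne_zero
      fun z hz => ?_).trans_eq ?_
    · obtain ⟨x, hx, rfl⟩ := Finset.mem_image.1 hz
      rw [hcharpoly x M (Finset.mem_filter.1 hx).2]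
      exact minpoly.aeval F x.1
    · rw [Matrix.charpoly_natDegree_eq_dim, Fintype.card_sum, two_mul]

open scoped Classical in
theorem card_symplecticGroup_le_card_filter_irreducible_charpoly [Finite F] [Nonempty l]
    [Fintype (symplecticGroup l F)] (h2 : (2 : F) ≠ 0) :
    Fintype.card (symplecticGroup l F) ≤ 4 * Fintype.card l *
      Finset.card {M : symplecticGroup l F | Irreducible M.1.charpoly} := by
  have := Fintype.ofFinite F
  obtain ⟨p, _⟩ := CharP.exists F
  have : Fact p.Prime := ⟨CharP.char_is_prime F p⟩
  let K := FiniteField.Extension F p (2 * Fintype.card l)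
  have hK : Module.finrank F K = 2 * Fintype.card l := FiniteField.finrank_extension ..
  have : Finite K := Module.finite_of_finite F
  have hF : 3 ≤ Fintype.card F := by
    refine Nat.succ_le_of_lt (lt_of_le_of_ne Fintype.one_lt_card fun h => h2 ?_)
    exact_mod_cast h ▸ FiniteField.cast_card_eq_zero F
  obtain ⟨b, hb⟩ := exists_basis_leftMulMatrix_mem_symplecticGroup_iff h2 hK
  set n := Fintype.card F ^ Fintype.card l + 1
  let T : Finset K := {x ∈ nthRootsFinset n (1 : K) | F⟮x⟯ = ⊤}
  have hT : n ≤ 2 * T.card :=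
    card_pow_add_one_le_two_mul_card_filter_adjoin_eq_top Fintype.card_ne_zero hF hK
  have hcount := card_symplecticGroup_mul_card_le (Nat.succ_pos _) hb (T := T) fun x hx =>
    (Finset.mem_filter.1 hx).imp_left (mem_nthRootsFinset (Nat.succ_pos _) _).1
  refine Nat.le_of_mul_le_mul_right (hcount.trans ?_) (show 0 < T.card by lia)
  calc n * (2 * Fintype.card l * _) ≤ 2 * T.card * (2 * Fintype.card l * _) :=
        Nat.mul_le_mul_right _ hT
    _ = 4 * Fintype.card l * _ * T.card := by ring

end IrreducibleCount

section Reducibility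

lemma irreducible_map_charpoly_of_irreducible_charpoly_map {R S K n : Type*} [CommRing R]
    [IsDomain R] [IsIntegrallyClosed R] [CommRing S] [IsDomain S] [Field K] [Algebra R K]
    [IsFractionRing R K] [Fintype n] [DecidableEq n] (f : R →+* S) {M : Matrix n n R}
    (h : Irreducible (M.map f).charpoly) : Irreducible (M.charpoly.map (algebraMap R K)) := by
  have hM := Matrix.charpoly_monic M
  rw [← hM.irreducible_iff_irreducible_map_fraction_map]
  refine hM.irreducible_of_irreducible_map f _ ?_
  rwa [← Matrix.charpoly_map]

lemma card_filter_forall_div_card_le_pow {κ : Type*} [Fintype κ] [DecidableEq κ] {G : κ → Type*}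
    [∀ i, Fintype (G i)] (P : ∀ i, G i → Prop) [∀ i, DecidablePred (P i)] {c : ℝ}
    (hc : ∀ i, (Finset.card {x | P i x} : ℝ) / Fintype.card (G i) ≤ c) :
    (Finset.card {x : ∀ i, G i | ∀ i, P i (x i)} : ℝ) / Fintype.card (∀ i, G i) ≤
      c ^ Fintype.card κ := by
  have hpi : ({x : ∀ i, G i | ∀ i, P i (x i)} : Finset _) =
      Fintype.piFinset fun i => {x | P i x} := by
    ext x
    simp
  rw [hpi, Fintype.card_piFinset, Fintype.card_pi, Nat.cast_prod, Nat.cast_prod,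
    ← Finset.prod_div_distrib]
  refine (Finset.prod_le_prod (fun i _ => by positivity) fun i _ => hc i).trans_eq ?_
  rw [Finset.prod_const, Finset.card_univ]

variable {l : Type*} [Fintype l] [DecidableEq l] [Nonempty l]

open scoped Classical in
lemma card_filter_not_irreducible_charpoly_div_card_le {F : Type*} [Field F] [Finite F]
    [Fintype (symplecticGroup l F)] (h2 : (2 : F) ≠ 0) :
    (Finset.card {M : symplecticGroup l F | ¬ Irreducible M.1.charpoly} : ℝ) /
      Fintype.card (symplecticGroup l F) ≤ 1 - 1 / (4 * Fintype.card l) := by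
  have hl : (0 : ℝ) < 4 * Fintype.card l := by positivity
  have hirr : (Fintype.card (symplecticGroup l F) : ℝ) ≤ 4 * Fintype.card l *
      Finset.card {M : symplecticGroup l F | Irreducible M.1.charpoly} :=
    mod_cast card_symplecticGroup_le_card_filter_irreducible_charpoly h2
  have hsplit : (Finset.card {M : symplecticGroup l F | Irreducible M.1.charpoly} : ℝ) +
      Finset.card {M : symplecticGroup l F | ¬ Irreducible M.1.charpoly} =
        Fintype.card (symplecticGroup l F) :=
    mod_cast Finset.card_filter_add_card_filter_not _
  rw [div_le_iff₀ (mod_cast Fintype.card_pos), sub_mul, one_mul, div_mul_eq_mul_div, one_mul,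
    le_sub_iff_add_le, ← hsplit, add_comm, add_le_add_iff_right, hsplit, div_le_iff₀' hl]
  exact hirr

end Reducibility

section Sieve

lemma exists_finset_primes_card_eq (P k : ℕ) :
    ∃ s : Finset ℕ, (∀ p ∈ s, p.Prime ∧ P ≤ p) ∧ s.card = k := by
  obtain ⟨s, hs, hcard⟩ :=
    (Nat.infinite_setOfPred_prime.sdiff (Set.finite_Iio P)).exists_subset_card_eq k
  exact ⟨s, fun p hp => (hs hp).imp_right not_lt.1, hcard⟩

lemma natCast_zmod_ne_zero_of_lt {m p : ℕ} (hm : 0 < m) (hmp : m < p) : (m : ZMod p) ≠ 0 :=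
  (ZMod.natCast_eq_zero_iff m p).not.2 (Nat.not_dvd_of_pos_of_lt hm hmp)

lemma isPrimitive_map_natCast {ι R : Type*} [Fintype ι] [DecidableEq ι] [Ring R] [LinearOrder R]
    [IsStrictOrderedRing R] {A : Matrix ι ι ℕ} {k : ℕ} (hk : 0 < k)
    (hpos : ∀ i j, 0 < (A ^ k) i j) : (A.map (Nat.cast : ℕ → R)).IsPrimitive := by
  have hpow : A.map (Nat.cast : ℕ → R) ^ k = (A ^ k).map Nat.cast :=
    (Matrix.map_pow A (Nat.castRingHom R) k).symm
  exact ⟨fun i j => Nat.cast_nonneg _, k, hk, fun i j => hpow ▸ Nat.cast_pos.2 (hpos i j)⟩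

lemma closure_range_reductionMod_comp {l ι : Type*} [Fintype l] [DecidableEq l] {s : Finset ℕ}
    (hs : ∀ p ∈ s, p.Prime) {t : ι → symplecticGroup l ℤ}
    (hgen : Subgroup.closure (Set.range t) = ⊤) :
    Subgroup.closure (Set.range (reductionMod l s ∘ t)) = ⊤ := by
  rw [Set.range_comp, ← MonoidHom.map_closure, hgen, ← MonoidHom.range_eq_map,
    MonoidHom.range_eq_top]
  exact reductionMod_surjective hs

variable {l ι : Type*} [Fintype l] [DecidableEq l] [Nonempty l] [Fintype ι] [DecidableEq ι]
  [Nonempty ι] {A : Matrix ι ι ℝ} {t : ι → symplecticGroup l ℤ} {s : Finset ℕ}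

open scoped Classical in
lemma eventually_sum_walkWeight_filter_not_irreducible_div_lt (hA : A.IsPrimitive)
    (hsymm : A.IsSymm) (hs : ∀ p ∈ s, p.Prime ∧ 5 ≤ p)
    (hgen : Subgroup.closure (Set.range (reductionMod l s ∘ t)) = ⊤) {ε : ℝ}
    (hε : (1 - 1 / (4 * Fintype.card l) : ℝ) ^ s.card < ε) :
    ∀ᶠ N in atTop, (∑ w : Fin (N + 1) → ι with
        ¬ Irreducible ((walkProd t w).1.charpoly.map (algebraMap ℤ ℚ)), walkWeight A w) /
      ∑ w : Fin (N + 1) → ι, walkWeight A w < ε := by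
  have hprime (p : s) : Fact (p : ℕ).Prime := ⟨(hs p p.2).1⟩
  have hne {m : ℕ} (hm : 0 < m) (hm' : m < 5) (p : s) : (m : ZMod p) ≠ 0 :=
    natCast_zmod_ne_zero_of_lt hm (hm'.trans_le (hs p p.2).2)
  have hperf : commutator (∀ p : s, symplecticGroup l (ZMod p)) = ⊤ := commutator_pi_eq_top
    fun p => commutator_symplecticGroup_eq_top (mod_cast hne two_pos (by lia) p)
      (mod_cast hne three_pos (by lia) p)
  have hdensity (p : s) := card_filter_not_irreducible_charpoly_div_card_le (l := l) (F := ZMod p)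
    (mod_cast hne two_pos (by lia) p)
  have hbad := card_filter_forall_div_card_le_pow
    (fun (p : s) (M : symplecticGroup l (ZMod p)) => ¬ Irreducible M.1.charpoly)
    (c := (1 - 1 / (4 * Fintype.card l) : ℝ)) hdensity
  rw [Fintype.card_coe] at hbad
  filter_upwards [(tendsto_sum_walkWeight_filter_div hA hsymm hgen hperf _).eventually_lt_const
    (hbad.trans_lt hε)] with N hN
  refine lt_of_le_of_lt ?_ hN
  gcongr with w
  · exact Finset.sum_nonneg fun w _ => walkWeight_nonneg hA.nonneg w
  · exact fun w _ _ => walkWeight_nonneg hA.nonneg w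
  intro hred
  rw [← map_walkProd, Finset.mem_filter_univ]
  exact fun p hp => hred (irreducible_map_charpoly_of_irreducible_charpoly_map _ hp)

end Sieve

end SymplecticWalk

open scoped Classical in
theorem stmt9_general {l ι : Type*} [Fintype l] [DecidableEq l] [Nonempty l] [Fintype ι]
    [DecidableEq ι] [Nonempty ι] {A : Matrix ι ι ℝ} (hA : A.IsPrimitive) (hsymm : A.IsSymm)
    {t : ι → Matrix.symplecticGroup l ℤ} {P : ℕ}
    (hgen : ∀ s : Finset ℕ, (∀ p ∈ s, p.Prime ∧ P ≤ p) →
      Subgroup.closure (Set.range (SymplecticWalk.reductionMod l s ∘ t)) = ⊤) :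
    Filter.Tendsto (fun N : ℕ =>
        (∑ w : Fin (N + 1) → ι with
          ¬ Irreducible ((SymplecticWalk.walkProd t w).1.charpoly.map (algebraMap ℤ ℚ)),
          SymplecticWalk.walkWeight A w) /
        ∑ w : Fin (N + 1) → ι, SymplecticWalk.walkWeight A w)
      Filter.atTop (nhds 0) := by
  have hnonneg {N : ℕ} (S : Finset (Fin (N + 1) → ι)) :
      0 ≤ ∑ w ∈ S, SymplecticWalk.walkWeight A w :=
    Finset.sum_nonneg fun w _ => SymplecticWalk.walkWeight_nonneg hA.nonneg w
  refine tendsto_order.2 ⟨fun a ha => .of_forall fun N =>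
    ha.trans_le (div_nonneg (hnonneg _) (hnonneg _)), fun ε hε => ?_⟩
  have hlt : (1 - 1 / (4 * Fintype.card l) : ℝ) < 1 := sub_lt_self _ (by positivity)
  obtain ⟨k, hk⟩ := exists_pow_lt_of_lt_one hε hlt
  obtain ⟨s, hs, rfl⟩ := SymplecticWalk.exists_finset_primes_card_eq (max P 5) k
  exact SymplecticWalk.eventually_sum_walkWeight_filter_not_irreducible_div_lt hA hsymm
    (fun p hp => (hs p hp).imp_right (le_max_right ..).trans)
    (hgen s fun p hp => (hs p hp).imp_right (le_max_left ..).trans) hk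

open scoped Classical in
/-- in a walk setup on `Sp(2g, ℤ)` with generating labels, the
proportion (by weight) of walks of length `N` whose product has reducible
characteristic polynomial over `ℚ` tends to `0` as `N → ∞`. -/
theorem stmt9 (g : ℕ) (hg : 1 ≤ g)
    (n : ℕ) (hn : 1 ≤ n) (A : Fin n → Fin n → ℕ)
    (t : Fin n → Matrix.symplecticGroup (Fin g) ℤ)
    (hsymm : ∀ i j, A i j = A j i)
    (hprim : ∃ k, 1 ≤ k ∧ ∀ i j, 0 < ((Matrix.of A) ^ k) i j)
    (hgen : Subgroup.closure (Set.range t) = ⊤) :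
    Filter.Tendsto (fun N : ℕ =>
        (∑ w ∈ Finset.univ.filter
            (fun w : Fin (N + 1) → Fin n =>
              ¬ Irreducible
                ((Matrix.charpoly
                    (((List.ofFn fun j => t (w j)).reverse.prod :
                        Matrix.symplecticGroup (Fin g) ℤ) :
                      Matrix (Fin g ⊕ Fin g) (Fin g ⊕ Fin g) ℤ)).map
                  (algebraMap ℤ ℚ))),
          ((∏ j : Fin N, A (w j.castSucc) (w j.succ) : ℕ) : ℝ)) /
        (∑ w : Fin (N + 1) → Fin n,
          ((∏ j : Fin N, A (w j.castSucc) (w j.succ) : ℕ) : ℝ)))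
      Filter.atTop (nhds 0) := by
  have : Nonempty (Fin g) := ⟨0, hg⟩
  have : Nonempty (Fin n) := ⟨0, hn⟩
  obtain ⟨k, hk, hpos⟩ := hprim
  convert! stmt9_general (P := 0) (SymplecticWalk.isPrimitive_map_natCast hk hpos)
    (.ext fun i j => congrArg Nat.cast (hsymm j i))
    (fun s hs => SymplecticWalk.closure_range_reductionMod_comp (fun p hp => (hs p hp).1) hgen)
    using 5 <;>
  exact Nat.cast_prod ..
end

section
/- Fix m ≥ 2 and let Γ = SL(m, ℤ). Consider a walk setup on Γ (symmetric primitive adjacency matrix A : Fin n → Fin n → ℕ with vertex labels t : Fin n → Γ) such that the set {t i : i : Fin n} generates Γ. For each N, let q_N be (sum of the weights of walks w of length N such that the characteristic polynomial of the underlying m × m integer matrix of γ_w, mapped to ℚ[X], is not irreducible) / (sum of the weights of all walks of length N). Then q_N tends to 0 as N tends to infinity. -/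
open scoped BigOperators

/-
Reduce modulo a prime `p` and follow the pair (endpoint of the walk, group element mod `p`). It
moves on the skew product of the graph by `SL(m, 𝔽_p)`, which is again primitive: the supports of
the distributions over the vertices eventually have constant size and, the graph being symmetric,
are eventually all equal to one set, on which every label acts as the shift in time. Hence
commutators fix this set, and `SL(m, 𝔽_p)` is perfect for `p > 3`. Doeblin's contraction then
shows that the group element becomes equidistributed in `SL(m, 𝔽_p)`.

If the characteristic polynomial of `g ∈ SL(m, ℤ)` is reducible, its factors have constant
coefficient `±1`, so a proper nonempty set of eigenvalues of `g` has product `±1`. A symmetrization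
of this condition is the vanishing of a fixed nonzero polynomial in the entries of `g`, whose zeros
have density `O(1/p)` in `SL(m, 𝔽_p)` by the Schwartz–Zippel lemma. Now let `p → ∞`.
-/

section SpecialLinearGroup

open Matrix Matrix.SpecialLinearGroup commutatorElement

variable {ι F : Type*} [Fintype ι] [DecidableEq ι] [Field F] {i j : ι}

lemma diag2n_eq_prod_transvection (hij : i ≠ j) (a : F) (ha : a ≠ 0) :
    diag2n hij a ha = SpecialLinearGroup.transvection hij a *
      SpecialLinearGroup.transvection hij.symm (-a⁻¹) * SpecialLinearGroup.transvection hij a *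
      SpecialLinearGroup.transvection hij (-1) * SpecialLinearGroup.transvection hij.symm 1 *
      SpecialLinearGroup.transvection hij (-1) := by
  apply Subtype.ext
  have diag_eq : (diag2n hij a ha).1 = 1 + single i i (a - 1) + single j j (a⁻¹ - 1) := by
    rw [diag2n_coe]
    ext x y
    simp only [diagonal_apply, Matrix.add_apply, one_apply, single_apply]
    split_ifs <;> grind
  rw [diag_eq]
  simp only [coe_mul, transvection_coe, mul_add, add_mul, mul_one, one_mul, single_mul_single_same,
    single_mul_single_of_ne _ _ _ _ hij.symm, single_mul_single_of_ne _ _ _ _ hij, add_zero]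
  clear diag_eq
  ext x y
  simp only [Matrix.add_apply, one_apply, single_apply]
  split_ifs <;> grind

lemma diag2n_mul_transvection (hij : i ≠ j) (a : F) (ha : a ≠ 0) (b : F) :
    diag2n hij a ha * SpecialLinearGroup.transvection hij b =
      SpecialLinearGroup.transvection hij (a ^ 2 * b) * diag2n hij a ha := by
  apply Subtype.ext
  rw [coe_mul, coe_mul, diag2n_coe, transvection_coe, transvection_coe]
  ext x y
  simp only [Matrix.add_apply, one_apply, diagonal_mul, mul_diagonal, single_apply]
  split_ifs <;> grind

lemma transvection_eq_commutatorElement (hij : i ≠ j) {a : F} (ha : a ≠ 0) (ha2 : a ^ 2 ≠ 1)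
    (c : F) : SpecialLinearGroup.transvection hij c =
      ⁅diag2n hij a ha, SpecialLinearGroup.transvection hij (c / (a ^ 2 - 1))⁆ := by
  have sub_ne : a ^ 2 - 1 ≠ 0 := sub_ne_zero_of_ne ha2
  have add_eq : a ^ 2 * (c / (a ^ 2 - 1)) = c + c / (a ^ 2 - 1) := by field_simp; ring
  rw [commutatorElement_def, diag2n_mul_transvection, add_eq, transvection_add]
  group

variable [Nontrivial ι]

theorem closure_transvection_eq_top :
    Subgroup.closure {g : SpecialLinearGroup ι F |
      ∃ (i j : ι) (hij : i ≠ j) (c : F), g = SpecialLinearGroup.transvection hij c} = ⊤ := by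
  set T := Subgroup.closure {g : SpecialLinearGroup ι F |
      ∃ (i j : ι) (hij : i ≠ j) (c : F), g = SpecialLinearGroup.transvection hij c}
  have transvection_mem (i j : ι) (hij : i ≠ j) (c : F) :
      SpecialLinearGroup.transvection hij c ∈ T :=
    Subgroup.subset_closure ⟨i, j, hij, c, rfl⟩
  refine (Subgroup.eq_top_iff' T).2 fun g ↦ diagonal_transvection_induction' (· ∈ T) g
    (fun i j hij a ha ↦ ?_) transvection_mem fun _ _ ↦ mul_mem
  rw [diag2n_eq_prod_transvection]
  refine mul_mem (mul_mem (mul_mem (mul_mem (mul_mem ?_ ?_) ?_) ?_) ?_) ?_ <;>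
    exact transvection_mem _ _ _ _

theorem isPerfect_specialLinearGroup {a : F} (ha : a ≠ 0) (ha2 : a ^ 2 ≠ 1) :
    Group.IsPerfect (SpecialLinearGroup ι F) := by
  rw [Group.isPerfect_def, eq_top_iff, ← closure_transvection_eq_top, Subgroup.closure_le]
  rintro _ ⟨i, j, hij, c, rfl⟩
  rw [transvection_eq_commutatorElement hij ha ha2]
  exact Subgroup.commutator_mem_commutator (Subgroup.mem_top _) (Subgroup.mem_top _)

theorem specialLinearGroup_map_zmod_surjective (p : ℕ) [Fact p.Prime] :
    Function.Surjective
      (SpecialLinearGroup.map (n := ι) (Int.castRingHom (ZMod p))) := by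
  rw [← MonoidHom.range_eq_top, eq_top_iff, ← closure_transvection_eq_top, Subgroup.closure_le]
  rintro _ ⟨i, j, hij, c, rfl⟩
  obtain ⟨z, rfl⟩ := ZMod.intCast_surjective c
  refine ⟨SpecialLinearGroup.transvection hij z, ?_⟩
  ext x y
  simp [transvection_coe, one_apply, single_apply]

end SpecialLinearGroup

section NonnegativeMatrix

open Matrix

variable {V : Type*} [Fintype V] [DecidableEq V] {A : Matrix V V ℝ}

lemma pow_succ_apply_pos_iff (hA : ∀ i j, 0 ≤ A i j) (k : ℕ) (i j : V) :
    0 < (A ^ (k + 1)) i j ↔ ∃ l, 0 < (A ^ k) i l ∧ 0 < A l j := by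
  rw [pow_succ, mul_apply, Finset.sum_pos_iff_of_nonneg fun l _ ↦
    mul_nonneg (pow_apply_nonneg hA k i l) (hA l j)]
  simp only [Finset.mem_univ, true_and]
  refine exists_congr fun l ↦ ⟨fun h ↦ ?_, fun h ↦ mul_pos h.1 h.2⟩
  exact ⟨pos_of_mul_pos_left h (hA l j), pos_of_mul_pos_right h (pow_apply_nonneg hA k i l)⟩

lemma reflTransGen_of_pow_apply_pos (hA : ∀ i j, 0 ≤ A i j) {k : ℕ} {i j : V}
    (h : 0 < (A ^ k) i j) : Relation.ReflTransGen (fun i j ↦ 0 < A i j) i j := by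
  induction k generalizing j with
  | zero =>
    rcases eq_or_ne i j with rfl | hij
    · exact .refl
    · simp [one_apply_ne hij] at h
  | succ k ih =>
    obtain ⟨l, hil, hlj⟩ := (pow_succ_apply_pos_iff hA k i j).1 h
    exact (ih hil).tail hlj

lemma exists_apply_pos_of_isPrimitive (hA : A.IsPrimitive) (j : V) : ∃ i, 0 < A i j := by
  obtain ⟨k, hk, hpos⟩ := hA.exists_pos_pow
  obtain ⟨k, rfl⟩ := Nat.exists_eq_succ_of_ne_zero hk.ne'
  obtain ⟨l, -, hlj⟩ := (pow_succ_apply_pos_iff hA.nonneg k j j).1 (hpos j j)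
  exact ⟨l, hlj⟩

lemma eventually_pow_apply_pos_of_isPrimitive (hA : A.IsPrimitive) :
    ∀ᶠ k in Filter.atTop, ∀ i j, 0 < (A ^ k) i j := by
  obtain ⟨k₀, -, hk₀⟩ := hA.exists_pos_pow
  filter_upwards [Filter.eventually_ge_atTop k₀] with k hk
  induction k, hk using Nat.le_induction with
  | base => exact hk₀
  | succ k _ ih =>
    intro i j
    obtain ⟨l, hlj⟩ := exists_apply_pos_of_isPrimitive hA j
    exact (pow_succ_apply_pos_iff hA.nonneg k i j).2 ⟨l, ih i l, hlj⟩

lemma exists_common_successor_of_sq_apply_pos (hA : ∀ i j, 0 ≤ A i j)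
    (hsymm : ∀ i j, 0 < A i j → 0 < A j i) {i j : V} (h : 0 < (A ^ 2) i j) :
    ∃ l, 0 < A i l ∧ 0 < A j l := by
  obtain ⟨l, hil, hlj⟩ := (pow_succ_apply_pos_iff hA 1 i j).1 h
  exact ⟨l, by simpa using hil, hsymm l j hlj⟩

lemma reflTransGen_common_successor (hA : A.IsPrimitive)
    (hsymm : ∀ i j, 0 < A i j → 0 < A j i) (i j : V) :
    Relation.ReflTransGen (fun i j ↦ ∃ l, 0 < A i l ∧ 0 < A j l) i j := by
  obtain ⟨k, hk⟩ := (Filter.tendsto_id.const_mul_atTop' (Nat.zero_lt_two)).eventually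
    (eventually_pow_apply_pos_of_isPrimitive hA) |>.exists
  refine Relation.ReflTransGen.mono
    (fun _ _ ↦ exists_common_successor_of_sq_apply_pos hA.nonneg hsymm) i j
    (reflTransGen_of_pow_apply_pos (k := k) (pow_apply_nonneg hA.nonneg 2) ?_)
  rw [← pow_mul]
  exact hk i j

lemma isPrimitive_map_natCast (R : Type*) [Ring R] [LinearOrder R] [IsStrictOrderedRing R]
    {A : Matrix V V ℕ} {k : ℕ} (hk : 0 < k) (hA : ∀ i j, 0 < (A ^ k) i j) :
    (A.map (Nat.cast : ℕ → R)).IsPrimitive where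
  nonneg _ _ := Nat.cast_nonneg _
  exists_pos_pow := ⟨k, hk, fun i j ↦ by
    rw [← Nat.coe_castRingHom, ← Matrix.map_pow]
    exact Nat.cast_pos.2 (hA i j)⟩

end NonnegativeMatrix

section SkewProduct

open Matrix
open scoped Pointwise

variable {V G : Type*} [Group G]

-- Elements of `T` act on the sequence as a shift, so the actions of all elements commute.
theorem smul_eq_self_of_forall_mem_smul_eq_succ {X : Type*} [Finite G] [Group.IsPerfect G]
    [MulAction G X] {T : Set G} (hT : Subgroup.closure T = ⊤) {x : ℕ → X}
    (hx : ∀ t ∈ T, ∀ n, t • x n = x (n + 1)) (g : G) (n : ℕ) : g • x n = x n := by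
  have exists_shift (g : G) : ∃ d, ∀ n, g • x n = x (n + d) := by
    have hg : g ∈ Submonoid.closure T := by
      rw [← Subgroup.closure_toSubmonoid_of_finite, hT]
      trivial
    induction hg using Submonoid.closure_induction with
    | mem t ht => exact ⟨1, hx t ht⟩
    | one => exact ⟨0, fun n ↦ one_smul G (x n)⟩
    | mul a b _ _ ha hb =>
      obtain ⟨c, hc⟩ := ha
      obtain ⟨d, hd⟩ := hb
      exact ⟨d + c, fun n ↦ by rw [mul_smul, hd, hc, add_assoc]⟩
  have smul_comm (a b : G) : a • b • x n = b • a • x n := by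
    obtain ⟨c, hc⟩ := exists_shift a
    obtain ⟨d, hd⟩ := exists_shift b
    rw [hc, hd, hc, hd, add_right_comm]
  have commutator_le : commutator G ≤ MulAction.stabilizer G (x n) := by
    rw [commutator_def, Subgroup.commutator_le]
    intro a _ b _
    rw [MulAction.mem_stabilizer_iff, commutatorElement_def, mul_smul, mul_smul, mul_smul,
      smul_comm a⁻¹ b⁻¹, smul_inv_smul, smul_inv_smul]
  exact commutator_le Group.IsPerfect.mem_commutator

section SetDynamics

variable [Fintype V] [DecidableEq V] [Finite G] {A : Matrix V V ℝ} {t : V → G} {R : ℕ → V → Set G}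

lemma ncard_le_ncard_add_of_pow_apply_pos (hA : ∀ i j, 0 ≤ A i j)
    (hR : ∀ n i j, 0 < A i j → t j • R n i ⊆ R (n + 1) j) {n k : ℕ} {i j : V}
    (h : 0 < (A ^ k) i j) : (R n i).ncard ≤ (R (n + k) j).ncard := by
  induction k generalizing j with
  | zero =>
    rcases eq_or_ne i j with rfl | hij
    · rfl
    · simp [one_apply_ne hij] at h
  | succ k ih =>
    obtain ⟨l, hil, hlj⟩ := (pow_succ_apply_pos_iff hA k i j).1 h
    calc (R n i).ncard ≤ (R (n + k) l).ncard := ih hil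
      _ = (t j • R (n + k) l).ncard := (Set.ncard_smul_set _ _).symm
      _ ≤ (R (n + (k + 1)) j).ncard := Set.ncard_le_ncard (hR _ _ _ hlj)

lemma eventually_ncard_eq (hA : A.IsPrimitive)
    (hR : ∀ n i j, 0 < A i j → t j • R n i ⊆ R (n + 1) j) (h₀ : ∃ i, (R 0 i).Nonempty) :
    ∃ s > 0, ∀ᶠ n in Filter.atTop, ∀ i, (R n i).ncard = s := by
  obtain ⟨i₀, hi₀⟩ := h₀
  let size (x : ℕ × V) : ℕ := (R x.1 x.2).ncard
  have size_bdd : BddAbove (Set.range size) :=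
    ⟨Nat.card G, by rintro _ ⟨x, rfl⟩; exact Set.ncard_le_card _⟩
  obtain ⟨⟨n₀, j₀⟩, h_max⟩ := Nat.sSup_mem ⟨size (0, i₀), Set.mem_range_self _⟩ size_bdd
  have size_le (n : ℕ) (i : V) : size (n, i) ≤ size (n₀, j₀) :=
    h_max ▸ le_csSup size_bdd (Set.mem_range_self _)
  refine ⟨size (n₀, j₀), ((Set.ncard_pos).2 hi₀).trans_le (size_le 0 i₀), ?_⟩
  have h_pos := (Filter.tendsto_sub_atTop_nat n₀).eventually
    (eventually_pow_apply_pos_of_isPrimitive hA)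
  filter_upwards [h_pos, Filter.eventually_ge_atTop n₀] with n hn hn₀ i
  have h_le := ncard_le_ncard_add_of_pow_apply_pos (n := n₀) hA.nonneg hR (hn j₀ i)
  rw [Nat.add_sub_cancel' hn₀] at h_le
  exact (size_le n i).antisymm h_le

/-
Once the cardinalities are constant the inclusions `hR` are equalities, so two vertices with a
common successor carry the same set; a walk of even length shows that all vertices do.
-/
theorem eventually_eq_univ_of_smul_subset [Group.IsPerfect G] (hA : A.IsPrimitive)
    (hsymm : ∀ i j, 0 < A i j → 0 < A j i) (ht : Subgroup.closure (Set.range t) = ⊤)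
    (hR : ∀ n i j, 0 < A i j → t j • R n i ⊆ R (n + 1) j) (h₀ : ∃ i, (R 0 i).Nonempty) :
    ∀ᶠ n in Filter.atTop, ∀ i, R n i = Set.univ := by
  obtain ⟨s, hs, h_card⟩ := eventually_ncard_eq hA hR h₀
  obtain ⟨n₀, h_card⟩ := Filter.eventually_atTop.1 h_card
  have smul_eq {n : ℕ} (hn : n₀ ≤ n) {i j : V} (hij : 0 < A i j) : t j • R n i = R (n + 1) j :=
    Set.eq_of_subset_of_ncard_le (hR n i j hij) <| by
      rw [Set.ncard_smul_set, h_card n hn, h_card (n + 1) (by lia)]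
  have eq_of_common {n : ℕ} (hn : n₀ ≤ n) {i j : V} (h : ∃ l, 0 < A i l ∧ 0 < A j l) :
      R n i = R n j := by
    obtain ⟨l, hil, hjl⟩ := h
    exact smul_left_cancel (t l) ((smul_eq hn hil).trans (smul_eq hn hjl).symm)
  have eq_const {n : ℕ} (hn : n₀ ≤ n) (i j : V) : R n i = R n j := by
    induction reflTransGen_common_successor hA hsymm i j with
    | refl => rfl
    | tail _ h ih => exact ih.trans (eq_of_common hn h)
  filter_upwards [Filter.eventually_ge_atTop n₀] with n hn i
  obtain ⟨g, hg⟩ : (R n i).Nonempty :=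
    Set.nonempty_of_ncard_ne_zero ((h_card n hn i).trans_ne hs.ne')
  have shift (g : G) (hg : g ∈ Set.range t) (k : ℕ) : g • R (n + k) i = R (n + (k + 1)) i := by
    obtain ⟨j, rfl⟩ := hg
    obtain ⟨l, hlj⟩ := exists_apply_pos_of_isPrimitive hA j
    rw [eq_const (by lia) i l, smul_eq (by lia) hlj, eq_const (by lia) j i, add_assoc]
  refine Set.eq_univ_of_forall fun h ↦ ?_
  have smul_eq_self := smul_eq_self_of_forall_mem_smul_eq_succ ht shift (h * g⁻¹) 0
  rw [add_zero] at smul_eq_self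
  rw [← smul_eq_self]
  exact ⟨g, hg, by simp⟩

end SetDynamics

variable [DecidableEq G]

/-- The transition matrix of the process `(w N, γ_w)` attached to the walks `w` of the weighted
graph `A` with vertex labels `t`: a step to the vertex `j` multiplies the group element by `t j` on
the left. -/
def skewProduct (A : Matrix V V ℝ) (t : V → G) : Matrix (V × G) (V × G) ℝ :=
  of fun x y ↦ if y.2 = t y.1 * x.2 then A x.1 y.1 else 0

lemma skewProduct_nonneg {A : Matrix V V ℝ} (hA : ∀ i j, 0 ≤ A i j) (t : V → G) (x y : V × G) :
    0 ≤ skewProduct A t x y := by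
  rw [skewProduct, of_apply]
  split_ifs
  exacts [hA _ _, le_rfl]

variable [Fintype V] [DecidableEq V] [Fintype G]

theorem isPrimitive_skewProduct [Group.IsPerfect G] {A : Matrix V V ℝ} {t : V → G}
    (hA : A.IsPrimitive) (hsymm : ∀ i j, 0 < A i j → 0 < A j i)
    (ht : Subgroup.closure (Set.range t) = ⊤) : (skewProduct A t).IsPrimitive := by
  have nonneg := skewProduct_nonneg hA.nonneg t
  have h_pos (x : V × G) :
      ∀ᶠ n in Filter.atTop, ∀ j, {g | 0 < (skewProduct A t ^ n) x (j, g)} = Set.univ := by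
    refine eventually_eq_univ_of_smul_subset hA hsymm ht ?_ ⟨x.1, x.2, by simp⟩
    rintro n i j hij _ ⟨g, hg, rfl⟩
    exact (pow_succ_apply_pos_iff nonneg n _ _).2 ⟨(i, g), hg, by simpa [skewProduct] using hij⟩
  obtain ⟨n, hn, hn₀⟩ :=
    ((Filter.eventually_all.2 h_pos).and (Filter.eventually_gt_atTop 0)).exists
  exact ⟨nonneg, n, hn₀, fun x y ↦ Set.eq_univ_iff_forall.1 (hn x y.1) y.2⟩

end SkewProduct

section RatioLimit

open Matrix

variable {W : Type*}

/-- The ratios `x i / y i` lie in an interval of length `δ`; the denominators are cleared. -/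
def RatioOscLE (x y : W → ℝ) (δ : ℝ) : Prop :=
  ∃ a, ∀ i, a * y i ≤ x i ∧ x i ≤ (a + δ) * y i

variable {B : Matrix W W ℝ} {x y : W → ℝ} {δ : ℝ}

lemma exists_ratioOscLE [Finite W] (x : W → ℝ) (hy : ∀ i, 0 < y i) : ∃ δ, RatioOscLE x y δ := by
  obtain ⟨C, hC⟩ := (Set.finite_range fun i ↦ |x i / y i|).bddAbove
  refine ⟨2 * C, -C, fun i ↦ ?_⟩
  obtain ⟨lower, upper⟩ := abs_le.1 (hC (Set.mem_range_self i))
  rw [le_div_iff₀ (hy i)] at lower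
  rw [div_le_iff₀ (hy i)] at upper
  exact ⟨lower, upper.trans_eq (by ring)⟩

lemma RatioOscLE.abs_sub_le (h : RatioOscLE x y δ) (hy : ∀ i, 0 < y i) (i j : W) :
    |x i / y i - x j / y j| ≤ δ := by
  obtain ⟨a, ha⟩ := h
  have lower (i : W) : a ≤ x i / y i := (le_div_iff₀ (hy i)).2 (ha i).1
  have upper (i : W) : x i / y i ≤ a + δ := (div_le_iff₀ (hy i)).2 (ha i).2
  rw [abs_sub_le_iff]
  constructor <;> linarith [lower i, lower j, upper i, upper j]

lemma exists_forall_mul_apply_le [Finite W] [Nonempty W] (hB : ∀ i j, 0 < B i j) :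
    ∃ c > 0, c ≤ 1 ∧ ∀ i i' j, c * B i' j ≤ B i j := by
  obtain ⟨⟨i₀, i₀', j₀⟩, h_min⟩ := Finite.exists_min fun x : W × W × W ↦ B x.1 x.2.2 / B x.2.1 x.2.2
  refine ⟨B i₀ j₀ / B i₀' j₀, div_pos (hB _ _) (hB _ _), ?_, fun i i' j ↦ ?_⟩
  · simpa [(hB i₀ j₀).ne'] using h_min (i₀, i₀, j₀)
  · exact (le_div_iff₀ (hB _ _)).1 (h_min (i, i', j))

variable [Fintype W]

lemma vecMul_mono (hB : ∀ i j, 0 ≤ B i j) (h : ∀ i, x i ≤ y i) (j : W) :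
    (x ᵥ* B) j ≤ (y ᵥ* B) j :=
  Finset.sum_le_sum fun i _ ↦ mul_le_mul_of_nonneg_right (h i) (hB i j)

lemma RatioOscLE.vecMul (h : RatioOscLE x y δ) (hB : ∀ i j, 0 ≤ B i j) :
    RatioOscLE (x ᵥ* B) (y ᵥ* B) δ := by
  obtain ⟨a, ha⟩ := h
  refine ⟨a, fun j ↦ ⟨?_, ?_⟩⟩
  · simpa [smul_vecMul] using vecMul_mono (x := a • y) hB (fun i ↦ (ha i).1) j
  · simpa [smul_vecMul] using vecMul_mono (y := (a + δ) • y) hB (fun i ↦ (ha i).2) j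

lemma mul_sum_mul_vecMul_le {c : ℝ} (hc : ∀ i i' j, c * B i' j ≤ B i j) (hx : ∀ i, 0 ≤ x i)
    (hy : ∀ i, 0 ≤ y i) (j : W) :
    c * (∑ i, x i) * (y ᵥ* B) j ≤ (∑ i, y i) * (x ᵥ* B) j := by
  simp only [vecMul, dotProduct, mul_assoc, Finset.sum_mul_sum]
  rw [Finset.sum_comm, Finset.mul_sum]
  simp_rw [Finset.mul_sum]
  refine Finset.sum_le_sum fun i' _ ↦ Finset.sum_le_sum fun i _ ↦ ?_
  calc c * (x i * (y i' * B i' j)) = y i' * (x i * (c * B i' j)) := by ring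
    _ ≤ y i' * (x i * B i j) := by gcongr; exacts [hy i', hx i, hc i i' j]

/-
Doeblin's argument: the mass of `x - a • y` and that of `(a + δ) • y - x` sum to `δ` times the mass
of `y`, and a positive matrix spreads a fixed share `c` of each of them over all coordinates.
-/
lemma exists_ratioOscLE_vecMul_of_pos [Nonempty W] (hB : ∀ i j, 0 < B i j) :
    ∃ r, 0 ≤ r ∧ r < 1 ∧ ∀ {x y : W → ℝ} {δ : ℝ}, (∀ i, 0 < y i) → RatioOscLE x y δ →
      RatioOscLE (x ᵥ* B) (y ᵥ* B) (r * δ) := by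
  obtain ⟨c, hc, hc1, hcB⟩ := exists_forall_mul_apply_le hB
  refine ⟨1 - c, sub_nonneg.2 hc1, sub_lt_self 1 hc, fun {x y δ} hy ⟨a, ha⟩ ↦ ?_⟩
  set Y := ∑ i, y i
  have Y_pos : 0 < Y := Finset.sum_pos (fun i _ ↦ hy i) Finset.univ_nonempty
  set σ := (∑ i, x i) / Y - a
  have lower (j : W) := mul_sum_mul_vecMul_le (x := x - a • y) hcB
    (fun i ↦ by simpa using (ha i).1) (fun i ↦ (hy i).le) j
  have upper (j : W) := mul_sum_mul_vecMul_le (x := (a + δ) • y - x) hcB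
    (fun i ↦ by simpa using (ha i).2) (fun i ↦ (hy i).le) j
  have sum_x : ∑ i, x i = (σ + a) * Y := by simp only [σ]; field_simp; ring
  simp only [Pi.sub_apply, Pi.smul_apply, smul_eq_mul, Finset.sum_sub_distrib, ← Finset.mul_sum,
    sub_vecMul, smul_vecMul, sum_x] at lower upper
  refine ⟨a + c * σ, fun j ↦ ⟨?_, ?_⟩⟩
  · exact le_of_mul_le_mul_left (by linarith [lower j]) Y_pos
  · exact le_of_mul_le_mul_left (by linarith [upper j]) Y_pos

lemma tendsto_sum_div_sum [Nonempty W] {α : Type*} {l : Filter α} {a b : α → W → ℝ} {c : ℝ}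
    (hb : ∀ N j, 0 < b N j) (h : ∀ j, Filter.Tendsto (fun N ↦ a N j / b N j) l (nhds c)) :
    Filter.Tendsto (fun N ↦ (∑ j, a N j) / ∑ j, b N j) l (nhds c) := by
  have sum_pos (N : α) : 0 < ∑ j, b N j :=
    Finset.sum_pos (fun j _ ↦ hb N j) Finset.univ_nonempty
  refine tendsto_order.2 ⟨fun u hu ↦ ?_, fun u hu ↦ ?_⟩
  · filter_upwards [Filter.eventually_all.2 fun j ↦ (h j).eventually_const_lt hu] with N hN
    rw [lt_div_iff₀ (sum_pos N), Finset.mul_sum]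
    exact Finset.sum_lt_sum_of_nonempty Finset.univ_nonempty
      fun j _ ↦ (lt_div_iff₀ (hb N j)).1 (hN j)
  · filter_upwards [Filter.eventually_all.2 fun j ↦ (h j).eventually_lt_const hu] with N hN
    rw [div_lt_iff₀ (sum_pos N), Finset.mul_sum]
    exact Finset.sum_lt_sum_of_nonempty Finset.univ_nonempty
      fun j _ ↦ (div_lt_iff₀ (hb N j)).1 (hN j)

variable [DecidableEq W]

lemma vecMul_pow_pos (hB : B.IsPrimitive) (hy : ∀ i, 0 < y i) (n : ℕ) (j : W) :
    0 < (y ᵥ* B ^ n) j := by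
  induction n generalizing j with
  | zero => simpa using hy j
  | succ n ih =>
    obtain ⟨i, hij⟩ := exists_apply_pos_of_isPrimitive hB j
    rw [pow_succ, ← vecMul_vecMul]
    exact Finset.sum_pos' (fun l _ ↦ mul_nonneg (ih l).le (hB.nonneg l j))
      ⟨i, Finset.mem_univ i, mul_pos (ih i) hij⟩

theorem tendsto_vecMul_pow_div_sub (hB : B.IsPrimitive) (x : W → ℝ) (hy : ∀ i, 0 < y i) (i j : W) :
    Filter.Tendsto (fun n : ℕ ↦ (x ᵥ* B ^ n) i / (y ᵥ* B ^ n) i - (x ᵥ* B ^ n) j / (y ᵥ* B ^ n) j)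
      Filter.atTop (nhds 0) := by
  have : Nonempty W := ⟨i⟩
  obtain ⟨k, -, hk⟩ := hB.exists_pos_pow
  obtain ⟨δ, hδ⟩ := exists_ratioOscLE x hy
  obtain ⟨r, hr0, hr1, contract⟩ := exists_ratioOscLE_vecMul_of_pos hk
  have osc_mul (l : ℕ) : RatioOscLE (x ᵥ* B ^ (l * k)) (y ᵥ* B ^ (l * k)) (r ^ l * δ) := by
    induction l with
    | zero => simpa using hδ
    | succ l ih =>
      have := contract (vecMul_pow_pos hB hy (l * k)) ih
      rwa [vecMul_vecMul, vecMul_vecMul, ← pow_add, ← Nat.succ_mul, ← mul_assoc,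
        ← pow_succ'] at this
  have osc_tendsto : Filter.Tendsto (fun l : ℕ ↦ r ^ l * δ) Filter.atTop (nhds 0) := by
    simpa using (tendsto_pow_atTop_nhds_zero_of_lt_one hr0 hr1).mul_const δ
  rw [Metric.tendsto_atTop]
  intro ε hε
  obtain ⟨l, hl⟩ := (osc_tendsto.eventually_lt_const hε).exists
  refine ⟨l * k, fun n hn ↦ ?_⟩
  obtain ⟨d, rfl⟩ := Nat.exists_eq_add_of_le hn
  have osc := (osc_mul l).vecMul (pow_apply_nonneg hB.nonneg d)
  rw [vecMul_vecMul, vecMul_vecMul, ← pow_add] at osc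
  rw [dist_zero_right]
  exact (osc.abs_sub_le (vecMul_pow_pos hB hy _) i j).trans_lt hl

end RatioLimit

section Walk

open Matrix

variable {V G : Type*} {N : ℕ}

/-- The weight of the walk `w` in the weighted graph with adjacency matrix `A`. -/
def walkWeight {R : Type*} [CommMonoid R] (A : Matrix V V R) (w : Fin (N + 1) → V) : R :=
  ∏ j : Fin N, A (w j.castSucc) (w j.succ)

/-- The group element `γ_w = t (w N) * ⋯ * t (w 0)` of the walk `w`. -/
def walkProd [Monoid G] (t : V → G) (w : Fin (N + 1) → V) : G :=
  (List.ofFn fun j ↦ t (w j)).reverse.prod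

open scoped Classical in
/-- The proportion, by weight, of the walks of length `N` satisfying `P`. -/
noncomputable def walkProportion [Fintype V] (A : Matrix V V ℝ) (P : (Fin (N + 1) → V) → Prop) :
    ℝ :=
  (∑ w with P w, walkWeight A w) / ∑ w : Fin (N + 1) → V, walkWeight A w

lemma walkWeight_snoc (A : Matrix V V ℝ) (w : Fin (N + 1) → V) (k : V) :
    walkWeight A (Fin.snoc w k : Fin (N + 2) → V) = walkWeight A w * A (w (Fin.last N)) k := by
  simp only [walkWeight, Fin.prod_univ_castSucc, Fin.snoc_castSucc, ← Fin.castSucc_succ,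
    Fin.succ_last, Fin.snoc_last]

lemma walkProd_snoc [Monoid G] (t : V → G) (w : Fin (N + 1) → V) (k : V) :
    walkProd t (Fin.snoc w k : Fin (N + 2) → V) = t k * walkProd t w := by
  simp only [walkProd, List.ofFn_succ' (n := N + 1), Fin.snoc_castSucc, Fin.snoc_last,
    List.concat_eq_append, List.reverse_append, List.reverse_singleton, List.singleton_append,
    List.prod_cons]

lemma map_walkProd {H : Type*} [Monoid G] [Monoid H] (f : G →* H) (t : V → G)
    (w : Fin (N + 1) → V) : f (walkProd t w) = walkProd (f ∘ t) w := by
  simp only [walkProd, map_list_prod, List.map_reverse, List.map_ofFn]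
  rfl

lemma walkWeight_nonneg {A : Matrix V V ℝ} (hA : ∀ i j, 0 ≤ A i j) (w : Fin (N + 1) → V) :
    0 ≤ walkWeight A w :=
  Finset.prod_nonneg fun _ _ ↦ hA _ _

variable [Fintype V]

lemma walkProportion_nonneg {A : Matrix V V ℝ} (hA : ∀ i j, 0 ≤ A i j)
    (P : (Fin (N + 1) → V) → Prop) : 0 ≤ walkProportion A P :=
  div_nonneg (Finset.sum_nonneg fun w _ ↦ walkWeight_nonneg hA w)
    (Finset.sum_nonneg fun w _ ↦ walkWeight_nonneg hA w)

lemma walkProportion_mono {A : Matrix V V ℝ} (hA : ∀ i j, 0 ≤ A i j)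
    {P Q : (Fin (N + 1) → V) → Prop} (hPQ : ∀ w, P w → Q w) :
    walkProportion A P ≤ walkProportion A Q := by
  classical
  refine div_le_div_of_nonneg_right ?_ (Finset.sum_nonneg fun w _ ↦ walkWeight_nonneg hA w)
  exact Finset.sum_le_sum_of_subset_of_nonneg (Finset.monotone_filter_right _ fun w _ ↦ hPQ w)
    fun w _ _ ↦ walkWeight_nonneg hA w

variable [Group G] [Fintype G] [DecidableEq G] (A : Matrix V V ℝ) (t : V → G)

lemma vecMul_skewProduct_apply (f : V × G → ℝ) (j : V) (h : G) :
    (f ᵥ* skewProduct A t) (j, h) = ∑ i, f (i, (t j)⁻¹ * h) * A i j := by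
  simp only [vecMul, dotProduct, skewProduct, of_apply, Fintype.sum_prod_type, mul_ite, mul_zero,
    ← inv_mul_eq_iff_eq_mul, Finset.sum_ite_eq, Finset.mem_univ, if_true]

variable [DecidableEq V]

lemma vecMul_skewProduct_pow_comp_fst (u : V → ℝ) (N : ℕ) :
    (u ∘ Prod.fst) ᵥ* skewProduct A t ^ N = (u ᵥ* A ^ N) ∘ Prod.fst := by
  induction N with
  | zero => simp
  | succ N ih =>
    rw [pow_succ, pow_succ, ← vecMul_vecMul, ← vecMul_vecMul, ih]
    ext ⟨j, h⟩
    rw [vecMul_skewProduct_apply]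
    rfl

lemma sum_vecMul_skewProduct_pow_apply (f : V × G → ℝ) (N : ℕ) (j : V) :
    ∑ h, (f ᵥ* skewProduct A t ^ N) (j, h) = ((fun i ↦ ∑ h, f (i, h)) ᵥ* A ^ N) j := by
  induction N generalizing j with
  | zero => simp
  | succ N ih =>
    calc ∑ h, (f ᵥ* skewProduct A t ^ (N + 1)) (j, h)
        = ∑ h, ∑ i, (f ᵥ* skewProduct A t ^ N) (i, (t j)⁻¹ * h) * A i j := by
          simp only [pow_succ, ← vecMul_vecMul, vecMul_skewProduct_apply]
      _ = ∑ i, ∑ h, (f ᵥ* skewProduct A t ^ N) (i, h) * A i j := by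
          rw [Finset.sum_comm]
          exact Finset.sum_congr rfl fun i _ ↦ Fintype.sum_equiv (Equiv.mulLeft (t j)⁻¹) _ _
            fun h ↦ rfl
      _ = ((fun i ↦ ∑ h, f (i, h)) ᵥ* A ^ (N + 1)) j := by
          rw [pow_succ, ← vecMul_vecMul, ← funext ih]
          exact Finset.sum_congr rfl fun i _ ↦ (Finset.sum_mul ..).symm

/-- The total weight of the walks `w` of length `N` with `(w N, γ_w) = x`. -/
def walkMass (N : ℕ) (x : V × G) : ℝ :=
  ((fun x ↦ if x.2 = t x.1 then 1 else 0) ᵥ* skewProduct A t ^ N) x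

theorem sum_walkWeight_mul (N : ℕ) (F : V × G → ℝ) :
    ∑ w : Fin (N + 1) → V, walkWeight A w * F (w (Fin.last N), walkProd t w) =
      ∑ x, walkMass A t N x * F x := by
  change _ = ((fun x ↦ if x.2 = t x.1 then 1 else 0) ᵥ* skewProduct A t ^ N) ⬝ᵥ F
  induction N generalizing F with
  | zero =>
    rw [← (Equiv.funUnique (Fin 1) V).symm.sum_comp]
    simp [dotProduct, Fintype.sum_prod_type, walkWeight, walkProd]
  | succ N ih =>
    have mulVec_eq :
        (fun x ↦ ∑ k, A x.1 k * F (k, t k * x.2)) = skewProduct A t *ᵥ F := by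
      ext x
      simp [mulVec, dotProduct, skewProduct, Fintype.sum_prod_type]
    rw [← (Fin.snocEquiv fun _ : Fin (N + 2) ↦ V).sum_comp, Fintype.sum_prod_type, Finset.sum_comm]
    simp only [Fin.snocEquiv, Equiv.coe_fn_mk, walkWeight_snoc, walkProd_snoc, Fin.snoc_last,
      mul_assoc, ← Finset.mul_sum]
    rw [ih fun x ↦ ∑ k, A x.1 k * F (k, t k * x.2), mulVec_eq, dotProduct_mulVec, vecMul_vecMul,
      ← pow_succ]

lemma walkProportion_walkProd_mem (S : Finset G) (N : ℕ) :
    walkProportion A (fun w : Fin (N + 1) → V ↦ walkProd t w ∈ S) =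
      (∑ j, ∑ h ∈ S, walkMass A t N (j, h)) / ∑ j, ∑ h, walkMass A t N (j, h) := by
  have sum_mem := sum_walkWeight_mul A t N fun x ↦ if x.2 ∈ S then 1 else 0
  have sum_all := sum_walkWeight_mul A t N 1
  simp only [mul_ite, mul_one, mul_zero, Fintype.sum_prod_type, Finset.sum_ite_mem,
    Finset.univ_inter, Pi.one_apply] at sum_mem sum_all
  rw [walkProportion, Finset.sum_filter, sum_all, ← sum_mem]
  congr!

lemma sum_walkMass (N : ℕ) (j : V) :
    ∑ h, walkMass A t N (j, h) = ((1 : V → ℝ) ᵥ* A ^ N) j := by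
  have sum_init (i : V) : ∑ h, (if h = t i then (1 : ℝ) else 0) = 1 := by simp
  simp only [walkMass, sum_vecMul_skewProduct_pow_apply, sum_init]
  rfl

lemma sum_walkMass_pos {A : Matrix V V ℝ} (hA : A.IsPrimitive) (N : ℕ) (j : V) :
    0 < ∑ h, walkMass A t N (j, h) :=
  (vecMul_pow_pos hA (fun _ ↦ one_pos) N j).trans_eq (sum_walkMass A t N j).symm

variable {A t}

theorem tendsto_walkMass_div_sum [Group.IsPerfect G] (hA : A.IsPrimitive)
    (hsymm : ∀ i j, 0 < A i j → 0 < A j i) (ht : Subgroup.closure (Set.range t) = ⊤)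
    (j : V) (g : G) :
    Filter.Tendsto (fun N : ℕ ↦ walkMass A t N (j, g) / ∑ h, walkMass A t N (j, h))
      Filter.atTop (nhds (Fintype.card G : ℝ)⁻¹) := by
  set q : ℕ → G → ℝ := fun N g ↦ walkMass A t N (j, g) / ∑ h, walkMass A t N (j, h)
  have q_eq (N : ℕ) : q N g = (Fintype.card G : ℝ)⁻¹ * (1 + ∑ h, (q N g - q N h)) := by
    have sum_q : ∑ h, q N h = 1 := by
      rw [← Finset.sum_div, div_self (sum_walkMass_pos t hA N j).ne']
    rw [Finset.sum_sub_distrib, sum_q, Finset.sum_const, Finset.card_univ]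
    simp
  have tendsto_sub (h : G) : Filter.Tendsto (fun N ↦ q N g - q N h) Filter.atTop (nhds 0) := by
    refine (tendsto_vecMul_pow_div_sub (isPrimitive_skewProduct hA hsymm ht)
      (fun x ↦ if x.2 = t x.1 then 1 else 0) (y := (1 : V → ℝ) ∘ Prod.fst) (fun _ ↦ one_pos)
      (j, g) (j, h)).congr fun N ↦ ?_
    simp only [vecMul_skewProduct_pow_comp_fst, Function.comp_apply, q, sum_walkMass]
    rfl
  refine Filter.Tendsto.congr (fun N ↦ (q_eq N).symm) ?_
  simpa using ((tendsto_finsetSum Finset.univ fun h _ ↦ tendsto_sub h).const_add 1).const_mul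
    (Fintype.card G : ℝ)⁻¹

end Walk

theorem tendsto_walkProportion_walkProd_mem {V G : Type*} [Fintype V] [DecidableEq V] [Nonempty V]
    [Group G] [Fintype G] [Group.IsPerfect G] {A : Matrix V V ℝ} {t : V → G}
    (hA : A.IsPrimitive) (hsymm : ∀ i j, 0 < A i j → 0 < A j i)
    (ht : Subgroup.closure (Set.range t) = ⊤) (S : Finset G) :
    Filter.Tendsto
      (fun N : ℕ ↦ walkProportion A fun w : Fin (N + 1) → V ↦ walkProd t w ∈ S)
      Filter.atTop (nhds (S.card / Fintype.card G)) := by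
  classical
  simp only [walkProportion_walkProd_mem]
  refine tendsto_sum_div_sum (sum_walkMass_pos t hA) fun j ↦ ?_
  simp only [Finset.sum_div, div_eq_mul_inv (S.card : ℝ), ← nsmul_eq_mul, ← Finset.sum_const]
  exact tendsto_finsetSum S fun g _ ↦ tendsto_walkMass_div_sum hA hsymm ht j g

section CharpolyReducibility

variable {ι : Type*}

/-- Evaluation of a polynomial in matrix entries at a given matrix. -/
noncomputable def aevalEntries {R K : Type*} [CommRing R] [CommRing K] [Algebra R K]
    (M : Matrix ι ι K) : MvPolynomial (ι × ι) R →ₐ[R] K :=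
  MvPolynomial.aeval fun x ↦ M x.1 x.2

lemma aevalEntries_map {K L : Type*} [CommRing K] [CommRing L] (f : K →+* L) (M : Matrix ι ι K)
    (F : MvPolynomial (ι × ι) ℤ) : aevalEntries (M.map f) F = f (aevalEntries M F) :=
  (MvPolynomial.comp_aeval_apply _ f.toIntAlgHom F).symm

variable [Fintype ι]

open Polynomial in
lemma aeval_esymm_eq_coeff_prod_X_sub_C {R K : Type*} [CommRing R] [CommRing K] [Algebra R K]
    (α : ι → K) {k : ℕ} (hk : k ≤ Fintype.card ι) :
    MvPolynomial.aeval α (MvPolynomial.esymm ι R k) =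
      (-1) ^ k * (∏ i, (X - C (α i))).coeff (Fintype.card ι - k) := by
  have vieta := (Finset.univ.val.map α).prod_X_sub_C_coeff (k := Fintype.card ι - k) (by simp)
  rw [Multiset.map_map, Multiset.card_map, Finset.card_val, Finset.card_univ,
    Nat.sub_sub_self hk] at vieta
  rw [Finset.prod_eq_multiset_prod, MvPolynomial.aeval_esymm_eq_multiset_esymm]
  refine Eq.trans ?_ (congrArg ((-1) ^ k * ·) vieta).symm
  rw [← mul_assoc, ← mul_pow]
  simp

variable [DecidableEq ι]

open MvPolynomial in
/-- The polynomial in the entries of a matrix which expresses a given symmetric polynomial in the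
eigenvalues, obtained by replacing elementary symmetric polynomials by signed coefficients of the
universal characteristic polynomial. -/
noncomputable def symmetricToEntries (R ι : Type*) [CommRing R] [Fintype ι] [DecidableEq ι] :
    symmetricSubalgebra ι R →ₐ[R] MvPolynomial (ι × ι) R :=
  (aeval fun k : Fin (Fintype.card ι) ↦ (-1) ^ (k + 1 : ℕ) *
    (Matrix.charpoly.univ R ι).coeff (Fintype.card ι - (k + 1))).comp
    (esymmAlgEquiv ι R rfl).symm.toAlgHom

open Polynomial in
lemma aevalEntries_symmetricToEntries {R K : Type*} [CommRing R] [CommRing K] [Algebra R K]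
    {M : Matrix ι ι K} {α : ι → K} (hα : M.charpoly = ∏ i, (X - C (α i)))
    (φ : MvPolynomial.symmetricSubalgebra ι R) :
    aevalEntries M (symmetricToEntries R ι φ) = MvPolynomial.aeval α (φ : MvPolynomial ι R) := by
  obtain ⟨P, rfl⟩ := (MvPolynomial.esymmAlgEquiv ι R rfl).surjective φ
  have hcoeff (k : ℕ) :
      aevalEntries M ((Matrix.charpoly.univ R ι).coeff k) = M.charpoly.coeff k :=
    Matrix.charpoly.univ_coeff_eval₂Hom ι (algebraMap R K) (fun x ↦ M x.1 x.2) k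
  have hsymm : (MvPolynomial.esymmAlgEquiv ι R rfl).symm.toAlgHom
      (MvPolynomial.esymmAlgEquiv ι R rfl P) = P := AlgEquiv.symm_apply_apply _ P
  rw [symmetricToEntries, AlgHom.comp_apply, hsymm, MvPolynomial.esymmAlgEquiv_apply,
    MvPolynomial.esymmAlgHom_apply, MvPolynomial.comp_aeval_apply, MvPolynomial.comp_aeval_apply]
  congr 2
  funext k
  rw [aeval_esymm_eq_coeff_prod_X_sub_C α k.2, ← hα, map_mul, map_pow, map_neg, map_one, hcoeff]

open Polynomial in
lemma exists_charpoly_eq_prod_X_sub_C {K : Type*} [Field K] [IsAlgClosed K] (M : Matrix ι ι K) :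
    ∃ α : ι → K, M.charpoly = ∏ i, (X - C (α i)) := by
  classical
  have hsplits := IsAlgClosed.splits M.charpoly
  let e : ι ≃ M.charpoly.roots.ToType := Fintype.equivOfCardEq <| by
    rw [Multiset.card_coe, ← hsplits.natDegree_eq_card_roots, M.charpoly_natDegree_eq_dim]
  refine ⟨fun i ↦ (e i).1, ?_⟩
  conv_lhs => rw [hsplits.eq_prod_roots_of_monic M.charpoly_monic, ← Multiset.map_univ]
  exact (e.prod_comp fun x ↦ X - C x.1).symm

open Polynomial in
lemma charpoly_smul_eq_prod_X_sub_C {K : Type*} [Field K] [Infinite K] {M : Matrix ι ι K}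
    {α : ι → K} (hα : M.charpoly = ∏ i, (X - C (α i))) {c : K} (hc : c ≠ 0) :
    (c • M).charpoly = ∏ i, (X - C (c * α i)) := by
  refine Polynomial.funext fun x ↦ ?_
  have hscalar : Matrix.scalar ι x - c • M = c • (Matrix.scalar ι (x / c) - M) := by
    rw [smul_sub, Matrix.scalar_apply, Matrix.scalar_apply, ← Matrix.diagonal_smul]
    congr 2
    funext i
    simp [mul_div_cancel₀ _ hc]
  rw [Matrix.eval_charpoly, hscalar, Matrix.det_smul, ← Matrix.eval_charpoly, hα, eval_prod,
    eval_prod, ← Finset.card_univ, ← Finset.prod_const, ← Finset.prod_mul_distrib]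
  refine Finset.prod_congr rfl fun i _ ↦ ?_
  simp [mul_sub, mul_div_cancel₀ _ hc]

open MvPolynomial in
/-- The symmetric polynomial in the eigenvalues that vanishes as soon as some proper nonempty set
of eigenvalues has product `±1` while all of them have product `±1`. The exponents make every
factor homogeneous, so that the vanishing is invariant under scaling. -/
noncomputable def subproductPoly (ι : Type*) [Fintype ι] [DecidableEq ι] : MvPolynomial ι ℤ :=
  ∏ S : Finset ι with S.Nonempty ∧ S ≠ Finset.univ,
    ((∏ i ∈ S, X i) ^ (2 * Fintype.card ι) - (∏ i, X i) ^ (2 * S.card))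

lemma isSymmetric_subproductPoly : (subproductPoly ι).IsSymmetric := by
  intro e
  rw [subproductPoly, map_prod]
  refine Finset.prod_equiv (Equiv.finsetCongr e) (fun S ↦ ?_) fun S _ ↦ ?_
  · have hcard : (S.map e.toEmbedding).card = S.card := S.card_map _
    simp [Equiv.finsetCongr_apply, ← Finset.card_eq_iff_eq_univ, hcard]
  · simp only [map_sub, map_pow, map_prod, MvPolynomial.rename_X, Equiv.finsetCongr_apply,
      Finset.prod_map, Finset.card_map, Equiv.coe_toEmbedding]
    rw [Equiv.prod_comp e fun i ↦ (MvPolynomial.X i : MvPolynomial ι ℤ)]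

lemma aeval_subproductPoly_eq_zero_iff {K : Type*} [CommRing K] [IsDomain K] {α : ι → K} :
    MvPolynomial.aeval α (subproductPoly ι) = 0 ↔ ∃ S : Finset ι, S.Nonempty ∧ S ≠ Finset.univ ∧
      (∏ i ∈ S, α i) ^ (2 * Fintype.card ι) = (∏ i, α i) ^ (2 * S.card) := by
  simp [subproductPoly, map_prod, Finset.prod_eq_zero_iff, sub_eq_zero, and_assoc]

/-- The polynomial in the entries of a matrix given by `subproductPoly` in its eigenvalues. It
vanishes at the elements of `SL(ι, ℤ)` with reducible characteristic polynomial. -/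
noncomputable def reducibilityPoly (ι : Type*) [Fintype ι] [DecidableEq ι] :
    MvPolynomial (ι × ι) ℤ :=
  symmetricToEntries ℤ ι ⟨subproductPoly ι, isSymmetric_subproductPoly⟩

open Polynomial in
lemma aevalEntries_reducibilityPoly_eq_zero_iff {K : Type*} [CommRing K] [IsDomain K]
    {M : Matrix ι ι K} {α : ι → K} (hα : M.charpoly = ∏ i, (X - C (α i))) :
    aevalEntries M (reducibilityPoly ι) = 0 ↔ ∃ S : Finset ι, S.Nonempty ∧ S ≠ Finset.univ ∧
      (∏ i ∈ S, α i) ^ (2 * Fintype.card ι) = (∏ i, α i) ^ (2 * S.card) := by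
  rw [reducibilityPoly, aevalEntries_symmetricToEntries hα, aeval_subproductPoly_eq_zero_iff]

lemma aevalEntries_smul_reducibilityPoly_eq_zero {K : Type*} [Field K] {M : Matrix ι ι K} {c : K}
    (hc : c ≠ 0) (hM : aevalEntries M (reducibilityPoly ι) = 0) :
    aevalEntries (c • M) (reducibilityPoly ι) = 0 := by
  let f := algebraMap K (AlgebraicClosure K)
  have : Infinite (AlgebraicClosure K) := IsAlgClosed.instInfinite
  obtain ⟨α, hα⟩ := exists_charpoly_eq_prod_X_sub_C (M.map f)
  obtain ⟨S, hne, huniv, hS⟩ := (aevalEntries_reducibilityPoly_eq_zero_iff hα).mp <| by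
    rw [aevalEntries_map, hM, map_zero]
  have hfc : f c ≠ 0 := (map_ne_zero f).mpr hc
  have hsmul : (c • M).map f = f c • M.map f := by ext; simp
  rw [← map_eq_zero_iff f f.injective, ← aevalEntries_map, hsmul,
    aevalEntries_reducibilityPoly_eq_zero_iff (charpoly_smul_eq_prod_X_sub_C hα hfc)]
  refine ⟨S, hne, huniv, ?_⟩
  simp only [Finset.prod_mul_distrib, Finset.prod_const, Finset.card_univ, mul_pow, hS, ← pow_mul]
  ring

open Polynomial in
lemma exists_prod_X_sub_C_of_mul_eq_prod {κ K : Type*} [CommRing K] [IsDomain K]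
    {s : Finset κ} {α : κ → K} {a b : K[X]} (ha : a.Monic) (hb : b.Monic)
    (hab : a * b = ∏ i ∈ s, (X - C (α i))) :
    ∃ S, a = ∏ i ∈ S, (X - C (α i)) ∧ S.card + b.natDegree = s.card := by
  classical
  obtain ⟨S, -, c, d, -, -, hcd, hac, -⟩ := mul_eq_mul_prime_prod (a := 1)
    (fun i _ ↦ prime_X_sub_C (α i)) (hab.trans (one_mul _).symm)
  have hc : c.Monic := (monic_prod_X_sub_C α S).of_mul_monic_right (hac ▸ ha)
  have haS : a = ∏ i ∈ S, (X - C (α i)) := by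
    rw [hac, hc.eq_one_of_isUnit (.of_mul_eq_one d hcd.symm), one_mul]
  refine ⟨S, haS, ?_⟩
  have hdeg := congrArg natDegree hab
  rwa [ha.natDegree_mul hb, haS, natDegree_finsetProd_X_sub_C_eq_card,
    natDegree_finsetProd_X_sub_C_eq_card] at hdeg

open Polynomial in
lemma sq_prod_eq_one_of_isUnit_coeff_zero {κ K : Type*} [CommRing K] {q : ℤ[X]}
    (hq : IsUnit (q.coeff 0)) {S : Finset κ} {α : κ → K}
    (hα : q.map (Int.castRingHom K) = ∏ i ∈ S, (X - C (α i))) : (∏ i ∈ S, α i) ^ 2 = 1 := by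
  have hcoeff : ((q.coeff 0 : ℤ) : K) = (-1) ^ S.card * ∏ i ∈ S, α i := by
    rw [← eq_intCast (Int.castRingHom K), ← coeff_map, hα, coeff_zero_prod]
    simp [Finset.prod_neg]
  calc (∏ i ∈ S, α i) ^ 2 = ((q.coeff 0 : ℤ) : K) ^ 2 := by
        rw [hcoeff, mul_pow, ← pow_mul, pow_mul', neg_one_sq, one_pow, one_mul]
    _ = 1 := by rw [← Int.cast_pow, Int.isUnit_sq hq, Int.cast_one]

open Polynomial in
lemma exists_monic_mul_eq_charpoly_of_not_irreducible [Nonempty ι] {M : Matrix ι ι ℤ}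
    (hM : ¬ Irreducible (M.charpoly.map (algebraMap ℤ ℚ))) :
    ∃ a b : ℤ[X], a.Monic ∧ b.Monic ∧ a * b = M.charpoly ∧ a.natDegree ≠ 0 ∧ b.natDegree ≠ 0 := by
  have hne : M.charpoly ≠ 1 := fun h ↦ by
    have hdeg := M.charpoly_natDegree_eq_dim
    rw [h, natDegree_one] at hdeg
    exact Fintype.card_ne_zero hdeg.symm
  rw [← M.charpoly_monic.irreducible_iff_irreducible_map_fraction_map,
    M.charpoly_monic.irreducible_iff_natDegree] at hM
  simpa [hne] using hM

open Polynomial in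
lemma isUnit_charpoly_coeff_zero {R : Type*} [CommRing R] (g : Matrix.SpecialLinearGroup ι R) :
    IsUnit ((g : Matrix ι ι R).charpoly.coeff 0) := by
  have hdet := Matrix.det_eq_sign_charpoly_coeff (g : Matrix ι ι R)
  rw [g.det_coe, mul_comm] at hdet
  exact .of_mul_eq_one _ hdet.symm

open Polynomial in
lemma aevalEntries_reducibilityPoly_eq_zero_of_not_irreducible [Nonempty ι]
    {g : Matrix.SpecialLinearGroup ι ℤ}
    (hg : ¬ Irreducible ((g : Matrix ι ι ℤ).charpoly.map (algebraMap ℤ ℚ))) :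
    aevalEntries (g : Matrix ι ι ℤ) (reducibilityPoly ι) = 0 := by
  let f := Int.castRingHom ℂ
  obtain ⟨a, b, ha, hb, hab, ha0, hb0⟩ := exists_monic_mul_eq_charpoly_of_not_irreducible hg
  obtain ⟨α, hα⟩ := exists_charpoly_eq_prod_X_sub_C ((g : Matrix ι ι ℤ).map f)
  have hmap : (g : Matrix ι ι ℤ).charpoly.map f = ∏ i, (X - C (α i)) := by
    rw [← Matrix.charpoly_map, hα]
  obtain ⟨S, haS, hcard⟩ := exists_prod_X_sub_C_of_mul_eq_prod (ha.map f) (hb.map f)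
    (by rw [← Polynomial.map_mul, hab, hmap])
  rw [hb.natDegree_map] at hcard
  have hau : IsUnit (a.coeff 0) := by
    refine isUnit_of_mul_isUnit_left (y := b.coeff 0) ?_
    rw [← mul_coeff_zero, hab]
    exact isUnit_charpoly_coeff_zero g
  rw [← map_eq_zero_iff f (RingHom.injective_int f), ← aevalEntries_map,
    aevalEntries_reducibilityPoly_eq_zero_iff hα]
  refine ⟨S, ?_, ?_, ?_⟩
  · rw [Finset.nonempty_iff_ne_empty]
    rintro rfl
    rw [Finset.prod_empty] at haS
    exact ha0 (by rw [← ha.natDegree_map f, haS, natDegree_one])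
  · rintro rfl
    exact hb0 (by lia)
  · rw [pow_mul, sq_prod_eq_one_of_isUnit_coeff_zero hau haS, pow_mul,
      sq_prod_eq_one_of_isUnit_coeff_zero (isUnit_charpoly_coeff_zero g) hmap, one_pow, one_pow]

lemma reducibilityPoly_ne_zero [Nonempty ι] : reducibilityPoly ι ≠ 0 := by
  intro h0
  let i₀ := Classical.arbitrary ι
  -- For `diag(2, 1, …, 1)` a set of eigenvalues has product `1` or `2`, and all of them `2`.
  let d : ι → ℤ := Function.update 1 i₀ 2
  have hd (S : Finset ι) : ∏ i ∈ S, d i = if i₀ ∈ S then 2 else 1 := by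
    simp [d, Function.update_apply]
  obtain ⟨S, hne, huniv, hS⟩ := (aevalEntries_reducibilityPoly_eq_zero_iff
    (Matrix.charpoly_diagonal d)).mp (by rw [h0, map_zero])
  have hcard : S.card < Fintype.card ι := S.card_lt_iff_ne_univ.mpr huniv
  have hpos : 0 < S.card := hne.card_pos
  rw [hd, hd, if_pos (Finset.mem_univ i₀)] at hS
  split_ifs at hS
  · have := pow_right_injective₀ two_pos (by norm_num) hS
    lia
  · have := one_lt_pow₀ (one_lt_two (α := ℤ)) (n := 2 * S.card) (by lia)
    rw [one_pow] at hS
    lia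

end CharpolyReducibility

section Counting

lemma card_zeros_mul_card_le {σ K : Type*} [Fintype σ] [DecidableEq σ] [CommRing K] [IsDomain K]
    [Fintype K] [DecidableEq K] {F : MvPolynomial σ K} (hF : F ≠ 0) :
    Finset.card {x : σ → K | MvPolynomial.eval x F = 0} * Fintype.card K ≤
      F.totalDegree * Fintype.card K ^ Fintype.card σ := by
  let e := Fintype.equivFin σ
  have hF' : MvPolynomial.rename e F ≠ 0 :=
    (map_ne_zero_iff _ (MvPolynomial.rename_injective e e.injective)).mpr hF
  have hzeros : Finset.card {x : σ → K | MvPolynomial.eval x F = 0} =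
      Finset.card {y ∈ Fintype.piFinset fun _ : Fin (Fintype.card σ) ↦ (Finset.univ : Finset K) |
        MvPolynomial.eval y (MvPolynomial.rename e F) = 0} :=
    Finset.card_equiv (e.arrowCongr (Equiv.refl K)) fun x ↦ by
      simp [MvPolynomial.eval_rename, Equiv.arrowCongr, Function.comp_assoc]
  have hq : (0 : ℚ≥0) < Fintype.card K := by exact_mod_cast Fintype.card_pos
  have hzippel := MvPolynomial.schwartz_zippel_totalDegree hF' Finset.univ
  rw [← hzeros, Finset.card_univ, div_le_div_iff₀ (pow_pos hq _) hq] at hzippel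
  refine le_trans (by exact_mod_cast hzippel) (Nat.mul_le_mul_right _ ?_)
  exact MvPolynomial.totalDegree_rename_le e F

variable {ι K : Type*} [Fintype ι] [DecidableEq ι] [Field K] [Fintype K]

lemma card_pow_le_two_pow_mul_card_GL :
    Fintype.card K ^ (Fintype.card ι * Fintype.card ι) ≤
      2 ^ Fintype.card ι * Nat.card (Matrix.GeneralLinearGroup ι K) := by
  let e : Matrix.GeneralLinearGroup ι K ≃ Matrix.GeneralLinearGroup (Fin (Fintype.card ι)) K :=
    (Units.mapEquiv (Matrix.reindexRingEquiv K (Fintype.equivFin ι)).toMulEquiv).toEquiv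
  have hq : 2 ≤ Fintype.card K := Fintype.one_lt_card
  rw [Nat.card_congr e, Matrix.card_GL_field]
  calc Fintype.card K ^ (Fintype.card ι * Fintype.card ι)
      = ∏ _i : Fin (Fintype.card ι), Fintype.card K ^ Fintype.card ι := by
        rw [Fin.prod_const, pow_mul]
    _ ≤ ∏ i : Fin (Fintype.card ι),
          2 * (Fintype.card K ^ Fintype.card ι - Fintype.card K ^ (i : ℕ)) := by
        refine Finset.prod_le_prod' fun i _ ↦ ?_
        have hi : 2 * Fintype.card K ^ (i : ℕ) ≤ Fintype.card K ^ Fintype.card ι :=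
          calc 2 * Fintype.card K ^ (i : ℕ) ≤ Fintype.card K ^ (i + 1 : ℕ) := by
                rw [pow_succ']; exact Nat.mul_le_mul_right _ hq
            _ ≤ _ := Nat.pow_le_pow_right (by lia) i.2
        lia
    _ = _ := by rw [Finset.prod_mul_distrib, Fin.prod_const]

lemma card_GL_le_mul_card_SL [Nonempty ι] [DecidableEq K] :
    Nat.card (Matrix.GeneralLinearGroup ι K) ≤
      Fintype.card Kˣ * Fintype.card (Matrix.SpecialLinearGroup ι K) := by
  rw [← Fintype.card_prod, ← Nat.card_eq_fintype_card]
  let D (u : Kˣ) : Matrix ι ι K :=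
    Matrix.diagonal (Function.update 1 (Classical.arbitrary ι) (u⁻¹ : Kˣ))
  have hD (u : Kˣ) : (D u).det = (u⁻¹ : Kˣ) := by
    simp [D, Function.update_apply]
  let f (g : Matrix.GeneralLinearGroup ι K) : Kˣ × Matrix.SpecialLinearGroup ι K :=
    (g.det, ⟨D g.det * g, by
      rw [Matrix.det_mul, hD, ← Matrix.GeneralLinearGroup.val_det_apply, Units.inv_mul]⟩)
  refine Nat.card_le_card_of_injective f fun g g' h ↦ ?_
  have hdet : g.det = g'.det := congrArg Prod.fst h
  have hmul : D g.det * g = D g'.det * g' := congrArg (fun z ↦ (z.2 : Matrix ι ι K)) h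
  have hunit : IsUnit (D g.det) := by
    rw [Matrix.isUnit_iff_isUnit_det, hD]
    exact Units.isUnit _
  rw [← hdet] at hmul
  exact Units.ext (hunit.mul_left_cancel hmul)

lemma card_units_mul_card_le [Nonempty ι] [DecidableEq K] (Z : Finset (Matrix ι ι K))
    (hZ : ∀ c : K, c ≠ 0 → ∀ M ∈ Z, c • M ∈ Z) :
    Fintype.card Kˣ *
        Finset.card {g : Matrix.SpecialLinearGroup ι K | (g : Matrix ι ι K) ∈ Z} ≤
      Fintype.card ι * Z.card := by
  rw [← Finset.card_univ (α := Kˣ), ← Finset.card_product]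
  refine Finset.card_le_mul_card_image_of_maps_to (f := fun x ↦ (x.1 : K) • (x.2 : Matrix ι ι K))
    (fun x hx ↦ ?_) _ fun M _ ↦ ?_
  · exact hZ x.1 x.1.ne_zero _ (by simpa using hx)
  -- `c • g = M` with `det g = 1` forces `c ^ card ι = det M`, and `c` determines `g`.
  calc _ ≤ (Polynomial.nthRoots (Fintype.card ι) M.det).toFinset.card := by
        refine Finset.card_le_card_of_injOn (fun x ↦ (x.1 : K)) (fun x hx ↦ ?_) ?_
        · obtain rfl := (Finset.mem_filter.mp hx).2
          simp [Polynomial.mem_nthRoots Fintype.card_pos]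
        · rintro ⟨c, g⟩ hg ⟨c', g'⟩ hg' h
          obtain rfl : c = c' := Units.ext h
          have hsmul : (c : K) • (g : Matrix ι ι K) = (c : K) • (g' : Matrix ι ι K) :=
            (Finset.mem_filter.mp hg).2.trans (Finset.mem_filter.mp hg').2.symm
          rw [Subtype.ext (smul_right_injective _ c.ne_zero hsmul)]
    _ ≤ _ := (Multiset.toFinset_card_le _).trans (Polynomial.card_nthRoots _ _)

lemma card_SL_zeros_mul_card_le [Nonempty ι] [DecidableEq K] {F : MvPolynomial (ι × ι) K}
    (hF : F ≠ 0)
    (hsmul : ∀ c : K, c ≠ 0 → ∀ M : Matrix ι ι K, aevalEntries M F = 0 →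
      aevalEntries (c • M) F = 0) :
    Finset.card {g : Matrix.SpecialLinearGroup ι K | aevalEntries (g : Matrix ι ι K) F = 0} *
        Fintype.card K ≤
      Fintype.card ι * F.totalDegree * 2 ^ Fintype.card ι *
        Fintype.card (Matrix.SpecialLinearGroup ι K) := by
  set q := Fintype.card K
  set Z : Finset (Matrix ι ι K) := {M | aevalEntries M F = 0}
  have hzeros : Z.card * q ≤ F.totalDegree * q ^ (Fintype.card ι * Fintype.card ι) := by
    have hcard : Z.card = Finset.card {x : ι × ι → K | MvPolynomial.eval x F = 0} :=
      Finset.card_equiv (Equiv.curry ι ι K).symm fun M ↦ by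
        rw [Finset.mem_filter_univ, Finset.mem_filter_univ, ← MvPolynomial.coe_aeval_eq_eval]
        rfl
    rw [hcard, ← Fintype.card_prod]
    exact card_zeros_mul_card_le hF
  have hscale := card_units_mul_card_le Z (by simpa [Z] using hsmul)
  simp only [Z, Finset.mem_filter_univ] at hscale
  refine Nat.le_of_mul_le_mul_left ?_ (Fintype.card_pos (α := Kˣ))
  calc _ = Fintype.card Kˣ * _ * q := (mul_assoc _ _ _).symm
    _ ≤ Fintype.card ι * Z.card * q := Nat.mul_le_mul_right q hscale
    _ = Fintype.card ι * (Z.card * q) := mul_assoc _ _ _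
    _ ≤ Fintype.card ι * (F.totalDegree * q ^ (Fintype.card ι * Fintype.card ι)) := by gcongr
    _ ≤ Fintype.card ι * (F.totalDegree * (2 ^ Fintype.card ι *
          (Fintype.card Kˣ * Fintype.card (Matrix.SpecialLinearGroup ι K)))) := by
        gcongr
        exact card_pow_le_two_pow_mul_card_GL.trans
          (Nat.mul_le_mul_left _ card_GL_le_mul_card_SL)
    _ = _ := by ring

end Counting

section ReductionModPrimes

open Filter Matrix

lemma eventually_map_zmod_ne_zero {σ : Type*} {F : MvPolynomial σ ℤ} (hF : F ≠ 0) :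
    ∀ᶠ p : ℕ in atTop, F.map (Int.castRingHom (ZMod p)) ≠ 0 := by
  obtain ⟨d, hd⟩ := MvPolynomial.ne_zero_iff.mp hF
  filter_upwards [eventually_gt_atTop (F.coeff d).natAbs] with p hp h0
  have hdvd : (p : ℤ) ∣ F.coeff d := by
    rw [← ZMod.intCast_zmod_eq_zero_iff_dvd, ← eq_intCast (Int.castRingHom (ZMod p)),
      ← MvPolynomial.coeff_map, h0, MvPolynomial.coeff_zero]
  exact hd (Int.eq_zero_of_dvd_of_natAbs_lt_natAbs hdvd (by simpa using hp))

variable {ι : Type*} [Fintype ι] [DecidableEq ι]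

/-- The matrices in `SL(ι, K)` at which `reducibilityPoly` vanishes; for `K = ℤ/p` they include the
reductions of all matrices in `SL(ι, ℤ)` with reducible characteristic polynomial. -/
noncomputable def reducibilityLocus (ι K : Type*) [Fintype ι] [DecidableEq ι] [CommRing K]
    [Fintype K] [DecidableEq K] : Finset (SpecialLinearGroup ι K) :=
  {g | aevalEntries (g : Matrix ι ι K) (reducibilityPoly ι) = 0}

variable (ι) in
lemma exists_card_reducibilityLocus_zmod_mul_le [Nonempty ι] :
    ∃ C : ℕ, ∀ᶠ p : ℕ in atTop, ∀ [Fact p.Prime],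
      (reducibilityLocus ι (ZMod p)).card * p ≤
        C * Fintype.card (SpecialLinearGroup ι (ZMod p)) := by
  refine ⟨Fintype.card ι * (reducibilityPoly ι).totalDegree * 2 ^ Fintype.card ι, ?_⟩
  filter_upwards [eventually_map_zmod_ne_zero (reducibilityPoly_ne_zero (ι := ι))] with p hp _
  have haeval (M : Matrix ι ι (ZMod p)) :
      aevalEntries M ((reducibilityPoly ι).map (Int.castRingHom (ZMod p))) =
        aevalEntries M (reducibilityPoly ι) :=
    MvPolynomial.aeval_map_algebraMap _ _ _
  have hbound := card_SL_zeros_mul_card_le hp fun c hc M ↦ by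
    simpa only [haeval] using aevalEntries_smul_reducibilityPoly_eq_zero hc
  simp only [haeval, ZMod.card] at hbound
  refine hbound.trans ?_
  gcongr
  exact Finset.sup_mono (MvPolynomial.support_map_subset _ _)

lemma map_mem_reducibilityLocus_of_not_irreducible [Nonempty ι] (p : ℕ) [NeZero p]
    {g : SpecialLinearGroup ι ℤ}
    (hg : ¬ Irreducible ((g : Matrix ι ι ℤ).charpoly.map (algebraMap ℤ ℚ))) :
    SpecialLinearGroup.map (Int.castRingHom (ZMod p)) g ∈ reducibilityLocus ι (ZMod p) := by
  rw [reducibilityLocus, Finset.mem_filter_univ, SpecialLinearGroup.map_apply_coe,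
    RingHom.mapMatrix_apply, aevalEntries_map,
    aevalEntries_reducibilityPoly_eq_zero_of_not_irreducible hg, map_zero]

variable [Nontrivial ι]

variable (ι) in
lemma isPerfect_specialLinearGroup_zmod {p : ℕ} [Fact p.Prime] (hp : 3 < p) :
    Group.IsPerfect (SpecialLinearGroup ι (ZMod p)) := by
  have hcast {k : ℕ} (hk : 0 < k) (hkp : k < p) : (k : ZMod p) ≠ 0 := by
    rw [Ne, ZMod.natCast_eq_zero_iff]
    exact Nat.not_dvd_of_pos_of_lt hk hkp
  refine isPerfect_specialLinearGroup (a := 2) (hcast two_pos (by lia)) fun h ↦ ?_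
  exact hcast three_pos hp (by linear_combination h)

lemma frequently_prime_and_closure_range_map_zmod_eq_top {V : Type*}
    {t : V → SpecialLinearGroup ι ℤ} (ht : Subgroup.closure (Set.range t) = ⊤) :
    ∃ᶠ p : ℕ in atTop, p.Prime ∧
      Subgroup.closure (Set.range (SpecialLinearGroup.map (Int.castRingHom (ZMod p)) ∘ t)) = ⊤ := by
  refine (Nat.frequently_atTop_iff_infinite.2 Nat.infinite_setOfPred_prime).mono fun p hp ↦ ⟨hp, ?_⟩
  have : Fact p.Prime := ⟨hp⟩
  rw [Set.range_comp, ← MonoidHom.map_closure, ht]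
  exact Subgroup.map_top_of_surjective _ (specialLinearGroup_map_zmod_surjective p)

variable {V : Type*} [Fintype V] [DecidableEq V] [Nonempty V]

lemma eventually_walkProportion_not_irreducible_lt {A : Matrix V V ℝ}
    {t : V → SpecialLinearGroup ι ℤ} (hA : A.IsPrimitive)
    (hsymm : ∀ i j, 0 < A i j → 0 < A j i) {p : ℕ} [Fact p.Prime] (hp : 3 < p)
    (ht : Subgroup.closure (Set.range (SpecialLinearGroup.map (Int.castRingHom (ZMod p)) ∘ t)) = ⊤)
    {C : ℕ} (hC : (reducibilityLocus ι (ZMod p)).card * p ≤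
        C * Fintype.card (SpecialLinearGroup ι (ZMod p))) {ε : ℝ} (hε : C / p < ε) :
    ∀ᶠ N : ℕ in atTop, walkProportion A (fun w : Fin (N + 1) → V ↦
      ¬ Irreducible ((↑(walkProd t w) : Matrix ι ι ℤ).charpoly.map (algebraMap ℤ ℚ))) < ε := by
  have := isPerfect_specialLinearGroup_zmod ι hp
  have density_le : ((reducibilityLocus ι (ZMod p)).card /
      Fintype.card (SpecialLinearGroup ι (ZMod p)) : ℝ) ≤ C / p := by
    rw [div_le_div_iff₀ (by exact_mod_cast Fintype.card_pos) (by exact_mod_cast by lia)]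
    exact_mod_cast hC
  filter_upwards [(tendsto_walkProportion_walkProd_mem hA hsymm ht
    (reducibilityLocus ι (ZMod p))).eventually_lt_const (density_le.trans_lt hε)] with N hN
  refine (walkProportion_mono hA.nonneg fun w hw ↦ ?_).trans_lt hN
  rw [← map_walkProd]
  exact map_mem_reducibilityLocus_of_not_irreducible p hw

theorem stmt10_general {A : Matrix V V ℝ} {t : V → SpecialLinearGroup ι ℤ}
    (hA : A.IsPrimitive) (hsymm : ∀ i j, 0 < A i j → 0 < A j i)
    (ht : ∃ᶠ p : ℕ in atTop, p.Prime ∧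
      Subgroup.closure (Set.range (SpecialLinearGroup.map (Int.castRingHom (ZMod p)) ∘ t)) = ⊤) :
    Tendsto (fun N : ℕ ↦ walkProportion A fun w : Fin (N + 1) → V ↦
      ¬ Irreducible ((↑(walkProd t w) : Matrix ι ι ℤ).charpoly.map (algebraMap ℤ ℚ)))
      atTop (nhds 0) := by
  obtain ⟨C, hC⟩ := exists_card_reducibilityLocus_zmod_mul_le ι
  refine tendsto_order.2 ⟨fun a ha ↦ .of_forall fun N ↦
    ha.trans_le (walkProportion_nonneg hA.nonneg _), fun ε hε ↦ ?_⟩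
  obtain ⟨p, ⟨hp, htp⟩, hCp, hp3, hCε⟩ := (ht.and_eventually <| hC.and <|
    (eventually_gt_atTop 3).and <|
      (tendsto_const_div_atTop_nhds_zero_nat (C : ℝ)).eventually_lt_const hε).exists
  have : Fact p.Prime := ⟨hp⟩
  exact eventually_walkProportion_not_irreducible_lt hA hsymm hp3 htp hCp hCε

end ReductionModPrimes

open scoped Classical in
/-- in a walk setup on `SL(m, ℤ)` with generating labels, the
proportion (by weight) of walks of length `N` whose product has reducible
characteristic polynomial over `ℚ` tends to `0` as `N → ∞`. -/
theorem stmt10 (m : ℕ) (hm : 2 ≤ m)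
    (n : ℕ) (hn : 1 ≤ n) (A : Fin n → Fin n → ℕ)
    (t : Fin n → Matrix.SpecialLinearGroup (Fin m) ℤ)
    (hsymm : ∀ i j, A i j = A j i)
    (hprim : ∃ k, 1 ≤ k ∧ ∀ i j, 0 < ((Matrix.of A) ^ k) i j)
    (hgen : Subgroup.closure (Set.range t) = ⊤) :
    Filter.Tendsto (fun N : ℕ =>
        (∑ w ∈ Finset.univ.filter
            (fun w : Fin (N + 1) → Fin n =>
              ¬ Irreducible
                ((Matrix.charpoly
                    (((List.ofFn fun j => t (w j)).reverse.prod :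
                        Matrix.SpecialLinearGroup (Fin m) ℤ) :
                      Matrix (Fin m) (Fin m) ℤ)).map
                  (algebraMap ℤ ℚ))),
          ((∏ j : Fin N, A (w j.castSucc) (w j.succ) : ℕ) : ℝ)) /
        (∑ w : Fin (N + 1) → Fin n,
          ((∏ j : Fin N, A (w j.castSucc) (w j.succ) : ℕ) : ℝ)))
      Filter.atTop (nhds 0) := by
  obtain ⟨k, hk, hpos⟩ := hprim
  have : Nonempty (Fin n) := ⟨⟨0, hn⟩⟩
  have : Nontrivial (Fin m) := Fin.nontrivial_iff_two_le.2 hm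
  simpa [walkProportion, walkWeight, walkProd] using
    stmt10_general (t := t) (isPrimitive_map_natCast ℝ hk hpos)
      (fun i j h ↦ by simpa [hsymm j i] using h)
      (frequently_prime_and_closure_range_map_zmod_eq_top hgen)
end
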